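/- Suppose b_σ ≠ 0 and μ₀ is a probability distribution on [0,∞) that is not the point mass at 0. Then for each ℓ ≥ 1 and every z = (z₋₁, z₀, …, z_ℓ) ∈ ℂ⁻ × ℝ^ℓ × ℂ*, there exists a unique solution s_ℓ(z) ∈ ℂ⁺ to the fixed-point equation s_ℓ(z) = 1/z_ℓ + γ_ℓ t_{ℓ−1}(z_prev(s_ℓ(z), z), (1−b_σ², 0, …, 0, b_σ²)). -/

import Mathlib

/-!
Proposition (well-posedness of the fixed-point equations): if `b_σ ≠ 0` and `μ₀` is a
probability distribution on `[0,∞)` that is not the point mass at `0`, then for each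
`ℓ ≥ 1` and every `z ∈ ℂ⁻ × ℝ^ℓ × ℂ*` there is a unique solution `s_ℓ(z) ∈ ℂ⁺` of the
fixed-point equation defining the recursion for `t_ℓ`.
-/

open MeasureTheory Filter Topology

/-- The domain `ℂ⁻ × ℝ^ℓ × ℂ*` for the argument `z = (z₋₁, z₀, …, z_ℓ)`:
the first entry lies in the open lower half-plane, the middle entries are real, and the
last entry lies in the closed lower half-plane with `0` removed. -/
def InDomZ {ℓ : ℕ} (zv : Fin (ℓ + 2) → ℂ) : Prop :=
  (zv 0).im < 0 ∧
  (∀ i : Fin (ℓ + 2), i ≠ 0 → i ≠ Fin.last (ℓ + 1) → (zv i).im = 0) ∧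
  (zv (Fin.last (ℓ + 1))).im ≤ 0 ∧ zv (Fin.last (ℓ + 1)) ≠ 0

/-- `z_prev(s, z) = (z₋₁ + (1−b²)/s, z₀, …, z_{ℓ−2}, z_{ℓ−1} + b²/s)`. -/
noncomputable def zprevVec (b : ℝ) {ℓ : ℕ} (s : ℂ) (zv : Fin (ℓ + 3) → ℂ) :
    Fin (ℓ + 2) → ℂ :=
  fun i => zv i.castSucc + (if i = 0 then (1 - (b : ℂ) ^ 2) / s else 0) +
    (if i = Fin.last (ℓ + 1) then (b : ℂ) ^ 2 / s else 0)

/-- `w_prev = (w₋₁, …, w_{ℓ−1}) − (w_ℓ / z_ℓ)·(z₋₁, …, z_{ℓ−1})`. -/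
noncomputable def wprevVec {ℓ : ℕ} (zv wv : Fin (ℓ + 3) → ℂ) : Fin (ℓ + 2) → ℂ :=
  fun i => wv i.castSucc - (wv (Fin.last (ℓ + 2)) / zv (Fin.last (ℓ + 2))) * zv i.castSucc

/-- The vector `(1 − b², 0, …, 0, b²)`. -/
noncomputable def eVec (b : ℝ) (ℓ : ℕ) : Fin (ℓ + 2) → ℂ :=
  fun i => if i = 0 then 1 - (b : ℂ) ^ 2 else if i = Fin.last (ℓ + 1) then (b : ℂ) ^ 2 else 0

/-- Pick-type two point inequality. -/
def PK (k : ℝ) (a b : ℂ) : Prop := ‖a - b‖ ^ 2 ≤ k * (a.im * b.im)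

/-- Strict Pick-type two point inequality. -/
def PS (k : ℝ) (a b : ℂ) : Prop := ‖a - b‖ ^ 2 < k * (a.im * b.im)

/-- `J s = -1/s`. -/
noncomputable def JJ (s : ℂ) : ℂ := -s⁻¹

lemma JJ_im (s : ℂ) : (JJ s).im = s.im / ‖s‖ ^ 2 := by
  simp [JJ, Complex.inv_im, Complex.normSq_eq_norm_sq, neg_div]

lemma ne_of_im {s : ℂ} (h : 0 < s.im) : s ≠ 0 := by
  rintro rfl; simp at h

lemma JJ_pos {s : ℂ} (h : 0 < s.im) : 0 < (JJ s).im := by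
  rw [JJ_im]
  have := norm_pos_iff.mpr (ne_of_im h)
  positivity

lemma JJ_JJ (s : ℂ) : JJ (JJ s) = s := by simp [JJ]

lemma JJ_norm (s : ℂ) : ‖JJ s‖ = ‖s‖⁻¹ := by simp [JJ]

lemma im_le_norm (s : ℂ) : s.im ≤ ‖s‖ := (le_abs_self _).trans (Complex.abs_im_le_norm s)

lemma JJ_norm_le {s : ℂ} {d : ℝ} (hd : 0 < d) (h : d ≤ s.im) : ‖JJ s‖ ≤ 1 / d := by
  rw [JJ_norm, ← one_div]
  exact one_div_le_one_div_of_le hd (h.trans (im_le_norm s))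

lemma JJ_tendsto {u : ℕ → ℂ} {a : ℂ} (h : Tendsto u atTop (𝓝 a)) (ha : a ≠ 0) :
    Tendsto (fun n => JJ (u n)) atTop (𝓝 (JJ a)) := (h.inv₀ ha).neg

lemma JJ_sub {a b : ℂ} (ha : a ≠ 0) (hb : b ≠ 0) :
    ‖JJ a - JJ b‖ ^ 2 = ‖a - b‖ ^ 2 / (‖a‖ ^ 2 * ‖b‖ ^ 2) := by
  have : JJ a - JJ b = (a - b) / (a * b) := by
    unfold JJ; field_simp; ring
  rw [this, norm_div, norm_mul, div_pow, mul_pow]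

lemma PK.inv {k : ℝ} {a b : ℂ} (ha : 0 < a.im) (hb : 0 < b.im) (h : PK k a b) :
    PK k (JJ a) (JJ b) := by
  unfold PK at *
  have h1 := norm_pos_iff.mpr (ne_of_im ha)
  have h2 := norm_pos_iff.mpr (ne_of_im hb)
  rw [JJ_sub (ne_of_im ha) (ne_of_im hb), JJ_im, JJ_im]
  have : k * (a.im / ‖a‖ ^ 2 * (b.im / ‖b‖ ^ 2)) = (k * (a.im * b.im)) / (‖a‖ ^ 2 * ‖b‖ ^ 2) := by
    field_simp
  rw [this]; gcongr

lemma PS.inv {k : ℝ} {a b : ℂ} (ha : 0 < a.im) (hb : 0 < b.im) (h : PS k a b) :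
    PS k (JJ a) (JJ b) := by
  unfold PS at *
  have h1 := norm_pos_iff.mpr (ne_of_im ha)
  have h2 := norm_pos_iff.mpr (ne_of_im hb)
  rw [JJ_sub (ne_of_im ha) (ne_of_im hb), JJ_im, JJ_im]
  have : k * (a.im / ‖a‖ ^ 2 * (b.im / ‖b‖ ^ 2)) = (k * (a.im * b.im)) / (‖a‖ ^ 2 * ‖b‖ ^ 2) := by
    field_simp
  rw [this]; gcongr

lemma PS.pk {k : ℝ} {a b : ℂ} (h : PS k a b) : PK k a b := le_of_lt h

lemma cross_aux {k p1 q1 p2 q2 n1 n2 : ℝ} (hk : 0 ≤ k) (hp1 : 0 ≤ p1) (hq1 : 0 ≤ q1) (hp2 : 0 ≤ p2)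
    (hq2 : 0 ≤ q2) 
    (h1 : n1 ^ 2 ≤ k * (p1 * q1)) (h2 : n2 ^ 2 ≤ k * (p2 * q2)) :
    2 * (n1 * n2) ≤ k * (p1 * q2 + p2 * q1) := by
  have h3 : (n1 * n2) ^ 2 ≤ (k * (p1 * q1)) * (k * (p2 * q2)) := by
    rw [mul_pow]; gcongr
  have h4 : (2 * (n1 * n2)) ^ 2 ≤ (k * (p1 * q2 + p2 * q1)) ^ 2 := by
    nlinarith [sq_nonneg (k * (p1 * q2 - p2 * q1))]
  exact le_of_sq_le_sq h4 (by positivity)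
where
  le_of_sq_le_sq {a b : ℝ} (h : a ^ 2 ≤ b ^ 2) (hb : 0 ≤ b) : a ≤ b := abs_le_of_sq_le_sq' h hb |>.2

lemma PK.add {k : ℝ} (hk : 0 ≤ k) {a b c d : ℂ} (ha : 0 ≤ a.im) (hb : 0 ≤ b.im) (hc : 0 ≤ c.im)
    (hd : 0 ≤ d.im) (h1 : PK k a b) (h2 : PK k c d) : PK k (a + c) (b + d) := by
  unfold PK at *
  have h3 := cross_aux hk ha hb hc hd h1 h2
  have h4 : ‖a + c - (b + d)‖ ≤ ‖a - b‖ + ‖c - d‖ := by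
    rw [add_sub_add_comm]; exact norm_add_le _ _
  have h5 : ‖a + c - (b + d)‖ ^ 2 ≤ (‖a - b‖ + ‖c - d‖) ^ 2 := by gcongr
  simp only [Complex.add_im]
  nlinarith

lemma PS.add {k : ℝ} (hk : 0 ≤ k) {a b c d : ℂ} (ha : 0 ≤ a.im) (hb : 0 ≤ b.im) (hc : 0 ≤ c.im)
    (hd : 0 ≤ d.im) (h1 : PS k a b) (h2 : PK k c d) : PS k (a + c) (b + d) := by
  have h1' := h1.pk
  unfold PK PS at *
  have h3 := cross_aux hk ha hb hc hd h1' h2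
  have h4 : ‖a + c - (b + d)‖ ≤ ‖a - b‖ + ‖c - d‖ := by
    rw [add_sub_add_comm]; exact norm_add_le _ _
  have h5 : ‖a + c - (b + d)‖ ^ 2 ≤ (‖a - b‖ + ‖c - d‖) ^ 2 := by gcongr
  simp only [Complex.add_im]
  nlinarith

lemma PK.smul {k : ℝ} {a b : ℂ} (r : ℝ) (h : PK k a b) : PK k (r * a) (r * b) := by
  unfold PK at *
  rw [← mul_sub, norm_mul, mul_pow]
  simp only [Complex.im_ofReal_mul, Complex.norm_real, Real.norm_eq_abs, sq_abs]
  nlinarith [mul_le_mul_of_nonneg_left h (sq_nonneg r)]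

lemma PS.smul {k : ℝ} {a b : ℂ} {r : ℝ} (hr : 0 < r) (h : PS k a b) : PS k (r * a) (r * b) := by
  unfold PS at *
  rw [← mul_sub, norm_mul, mul_pow]
  simp only [Complex.im_ofReal_mul, Complex.norm_real, Real.norm_eq_abs, sq_abs]
  nlinarith [mul_lt_mul_of_pos_left h (pow_pos hr 2)]

lemma PK.shift {k : ℝ} {a b : ℂ} (r : ℝ) (h : PK k a b) : PK k (r + a) (r + b) := by
  unfold PK at *
  simpa using h

lemma PK.refl {k : ℝ} (hk : 0 ≤ k) (a : ℂ) : PK k a a := by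
  unfold PK; simpa using mul_nonneg hk (mul_self_nonneg a.im)

lemma PS.refl {k : ℝ} (hk : 0 < k) {a : ℂ} (ha : 0 < a.im) : PS k a a := by
  unfold PS; simp; positivity

/-- the optimal constant -/
noncomputable def DD (a b : ℂ) : ℝ := ‖a - b‖ ^ 2 / (a.im * b.im)

lemma DD_nonneg {a b : ℂ} (ha : 0 < a.im) (hb : 0 < b.im) : 0 ≤ DD a b := by
  unfold DD; positivity

lemma DD_pos {a b : ℂ} (ha : 0 < a.im) (hb : 0 < b.im) (h : a ≠ b) : 0 < DD a b := by
  have := norm_pos_iff.mpr (sub_ne_zero.mpr h)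
  unfold DD; positivity

lemma PK_DD {a b : ℂ} (ha : 0 < a.im) (hb : 0 < b.im) : PK (DD a b) a b := by
  unfold PK DD; rw [div_mul_cancel₀]; positivity

lemma PK_iff {k : ℝ} {a b : ℂ} (ha : 0 < a.im) (hb : 0 < b.im) : PK k a b ↔ DD a b ≤ k := by
  unfold PK DD; rw [div_le_iff₀ (by positivity)]

lemma PS_iff {k : ℝ} {a b : ℂ} (ha : 0 < a.im) (hb : 0 < b.im) : PS k a b ↔ DD a b < k := by
  unfold PS DD; rw [div_lt_iff₀ (by positivity)]

structure Good (A B : ℂ → ℂ → ℂ) : Prop where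
  imA : ∀ x y : ℂ, 0 < x.im → 0 < y.im → 0 < (A x y).im
  imB : ∀ x y : ℂ, 0 < x.im → 0 < y.im → 0 < (B x y).im
  bA : ∀ x y : ℂ, 0 < x.im → 0 < y.im → ‖A x y‖ ≤ 1 / x.im
  bB : ∃ C : ℝ, 0 < C ∧ ∀ x y : ℂ, 0 < x.im → 0 < y.im → ‖B x y‖ ≤ C / y.im
  pA : ∀ (k : ℝ) (x y x' y' : ℂ), 0 ≤ k → 0 < x.im → 0 < y.im → 0 < x'.im → 0 < y'.im →
    PK k x x' → PK k y y' → PK k (A x y) (A x' y')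
  pB : ∀ (k : ℝ) (x y x' y' : ℂ), 0 ≤ k → 0 < x.im → 0 < y.im → 0 < x'.im → 0 < y'.im →
    PK k x x' → PK k y y' → PK k (B x y) (B x' y')
  sB : ∀ (k : ℝ) (x y x' y' : ℂ), 0 < k → 0 < x.im → 0 < y.im → 0 < x'.im → 0 < y'.im →
    PS k x x' → PK k y y' → PS k (B x y) (B x' y')
  nt : ∀ (x y : ℕ → ℂ) (X : ℂ) (c M : ℝ), 0 < X.im → (∀ n, 0 < (x n).im) → (∀ n, 0 < (y n).im) →
    Tendsto x atTop (𝓝 X) → Tendsto y atTop (𝓝 (c : ℂ)) → (∀ n, ‖y n - c‖ ≤ M * (y n).im) →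
    ∃ φ : ℕ → ℕ, StrictMono φ ∧
      Tendsto (fun n => (y (φ n) - c) * B (x (φ n)) (y (φ n))) atTop (𝓝 0) ∧
      ∃ κ : ℝ, 0 < κ ∧ ∀ᶠ n in atTop, κ ≤ (B (x (φ n)) (y (φ n))).im

lemma tendsto_of_PK {f : ℕ → ℂ} {a : ℂ} {k : ℕ → ℝ} {R : ℝ} (hk : Tendsto k atTop (𝓝 0))
    (hk0 : ∀ n, 0 ≤ k n)
    (hR : ∀ᶠ n in atTop, (f n).im ≤ R) (ha : 0 < a.im)
    (h : ∀ n, PK (k n) (f n) a) : Tendsto f atTop (𝓝 a) := by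
  rw [tendsto_iff_norm_sub_tendsto_zero]
  have h1 : Tendsto (fun n => k n * (R * a.im)) atTop (𝓝 0) := by
    simpa using hk.mul_const (R * a.im)
  have h2 : Tendsto (fun n => ‖f n - a‖ ^ 2) atTop (𝓝 0) := by
    refine tendsto_of_tendsto_of_tendsto_of_le_of_le' tendsto_const_nhds h1
      (Eventually.of_forall fun n => by positivity) ?_
    filter_upwards [hR] with n hn
    refine (h n).trans ?_
    have := hk0 n
    gcongr
  have h3 := h2.sqrt
  simpa [Real.sqrt_sq] using h3

lemma DD_tendsto {x : ℕ → ℂ} {X : ℂ} (hX : 0 < X.im) (h : Tendsto x atTop (𝓝 X)) :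
    Tendsto (fun n => DD (x n) X) atTop (𝓝 0) := by
  have : Tendsto (fun n => DD (x n) X) atTop (𝓝 (DD X X)) := by
    unfold DD
    refine Tendsto.div (((h.sub_const X).norm).pow 2)
      (((Complex.continuous_im.tendsto _).comp h).mul_const _) (by positivity)
  simpa [DD] using this

lemma Good.cont {A B : ℂ → ℂ → ℂ} (G : Good A B) {x y : ℕ → ℂ} {X Y : ℂ} (hX : 0 < X.im)
    (hY : 0 < Y.im) (hx : ∀ n, 0 < (x n).im) (hy : ∀ n, 0 < (y n).im)
    (tx : Tendsto x atTop (𝓝 X)) (ty : Tendsto y atTop (𝓝 Y)) :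
    Tendsto (fun n => A (x n) (y n)) atTop (𝓝 (A X Y)) ∧
    Tendsto (fun n => B (x n) (y n)) atTop (𝓝 (B X Y)) := by
  have hk : Tendsto (fun n => max (DD (x n) X) (DD (y n) Y)) atTop (𝓝 0) := by
    simpa using (DD_tendsto hX tx).max (DD_tendsto hY ty)
  have hk0 : ∀ n, 0 ≤ max (DD (x n) X) (DD (y n) Y) := fun n =>
    le_max_of_le_left (DD_nonneg (hx n) hX)
  have tx' := (Complex.continuous_im.tendsto _).comp tx
  have ty' := (Complex.continuous_im.tendsto _).comp ty
  obtain ⟨C, hC, hB⟩ := G.bB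
  constructor
  · refine tendsto_of_PK (R := 1 / (X.im / 2)) hk hk0 ?_ (G.imA _ _ hX hY) fun n =>
      G.pA _ _ _ _ _ (hk0 n) (hx n) (hy n) hX hY ((PK_iff (hx n) hX).2 (le_max_left _ _))
        ((PK_iff (hy n) hY).2 (le_max_right _ _))
    filter_upwards [tx'.eventually (lt_mem_nhds (half_lt_self hX))] with n hn
    refine (im_le_norm _).trans ((G.bA _ _ (hx n) (hy n)).trans ?_)
    exact one_div_le_one_div_of_le (by positivity) hn.le
  · refine tendsto_of_PK (R := C / (Y.im / 2)) hk hk0 ?_ (G.imB _ _ hX hY) fun n =>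
      G.pB _ _ _ _ _ (hk0 n) (hx n) (hy n) hX hY ((PK_iff (hx n) hX).2 (le_max_left _ _))
        ((PK_iff (hy n) hY).2 (le_max_right _ _))
    filter_upwards [ty'.eventually (lt_mem_nhds (half_lt_self hY))] with n hn
    refine (im_le_norm _).trans ((hB _ _ (hx n) (hy n)).trans ?_)
    exact div_le_div_of_nonneg_left hC.le (by positivity) hn.le

/-- Compactness / Julia lemma. -/
lemma julia {f : ℕ → ℂ → ℂ} {g : ℂ → ℂ} {s : ℕ → ℂ} (hs : ∀ n, 0 < (s n).im)
    (hf : ∀ n a, 0 < a.im → ‖s n - f n a‖ ^ 2 * a.im ≤ ‖s n - a‖ ^ 2 * (f n a).im)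
    (hg : ∀ a, 0 < a.im → 0 < (g a).im)
    (hfg : ∀ a, 0 < a.im → Tendsto (fun n => f n a) atTop (𝓝 (g a))) :
    (∃ φ : ℕ → ℕ, ∃ p : ℂ, StrictMono φ ∧ Tendsto (s ∘ φ) atTop (𝓝 p) ∧ 0 < p.im ∧ g p = p) ∨
    (∃ p : ℝ, ∀ a, 0 < a.im → ‖p - g a‖ ^ 2 * a.im ≤ ‖p - a‖ ^ 2 * (g a).im) ∨
    (∀ a, 0 < a.im → a.im ≤ (g a).im) := by
  by_cases hb : ∃ R : ℝ, ∃ᶠ n in atTop, s n ∈ Metric.closedBall (0 : ℂ) R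
  · obtain ⟨R, hR⟩ := hb
    obtain ⟨p, -, φ, hφ, hp⟩ := tendsto_subseq_of_frequently_bounded Metric.isBounded_closedBall hR
    have hp0 : 0 ≤ p.im := by
      refine ge_of_tendsto' ((Complex.continuous_im.tendsto _).comp hp) fun n => (hs _).le
    have key : ∀ a, 0 < a.im → ‖p - g a‖ ^ 2 * a.im ≤ ‖p - a‖ ^ 2 * (g a).im := by
      intro a ha
      have h1 := (hfg a ha).comp hφ.tendsto_atTop
      have h2 : Tendsto (fun n => ‖(s ∘ φ) n - f (φ n) a‖ ^ 2 * a.im) atTop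
          (𝓝 (‖p - g a‖ ^ 2 * a.im)) := (((hp.sub h1).norm).pow 2).mul_const _
      have h3 : Tendsto (fun n => ‖(s ∘ φ) n - a‖ ^ 2 * (f (φ n) a).im) atTop
          (𝓝 (‖p - a‖ ^ 2 * (g a).im)) :=
        (((hp.sub_const a).norm).pow 2).mul ((Complex.continuous_im.tendsto _).comp h1)
      exact le_of_tendsto_of_tendsto' h2 h3 fun n => hf _ a ha
    rcases hp0.eq_or_lt with h0 | h0
    · right; left
      refine ⟨p.re, ?_⟩
      have : ((p.re : ℝ) : ℂ) = p := Complex.ext (by simp) (by simp [h0])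
      rw [this]; exact key
    · left
      refine ⟨φ, p, hφ, hp, h0, ?_⟩
      have h1 := key p h0
      simp only [sub_self, norm_zero] at h1
      have h2 : ‖p - g p‖ ^ 2 * p.im = 0 := le_antisymm (by simpa using h1) (by positivity)
      have h3 : ‖p - g p‖ = 0 := by
        rcases mul_eq_zero.mp h2 with h | h
        · exact pow_eq_zero_iff two_ne_zero |>.mp h
        · exact absurd h h0.ne'
      exact (sub_eq_zero.mp (norm_eq_zero.mp h3)).symm
  · right; right
    intro a ha
    push Not at hb
    have hinf : Tendsto (fun n => ‖s n‖) atTop atTop := by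
      rw [tendsto_atTop]
      intro R
      have := hb R
      filter_upwards [this] with n hn
      simp at hn
      exact hn.le
    have hinv : Tendsto (fun n => (s n)⁻¹) atTop (𝓝 0) := by
      rw [tendsto_zero_iff_norm_tendsto_zero]
      simp only [norm_inv]
      exact hinf.inv_tendsto_atTop
    have h1 := hfg a ha
    have h2 : Tendsto (fun n => ‖1 - f n a * (s n)⁻¹‖ ^ 2 * a.im) atTop (𝓝 a.im) := by
      have := ((((h1.mul hinv).const_sub 1).norm).pow 2).mul_const a.im
      simpa using this
    have h3 : Tendsto (fun n => ‖1 - a * (s n)⁻¹‖ ^ 2 * (f n a).im) atTop (𝓝 (g a).im) := by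
      have := ((((hinv.const_mul a).const_sub 1).norm).pow 2).mul
        ((Complex.continuous_im.tendsto _).comp h1)
      simpa using this
    refine le_of_tendsto_of_tendsto' h2 h3 fun n => ?_
    have hn := ne_of_im (hs n)
    have e : ∀ c : ℂ, ‖1 - c * (s n)⁻¹‖ ^ 2 = ‖s n - c‖ ^ 2 / ‖s n‖ ^ 2 := by
      intro c
      rw [← div_pow, ← norm_div]; congr 2; field_simp
    rw [e, e, div_mul_eq_mul_div, div_mul_eq_mul_div]
    have := hf n a ha
    gcongr

/-- Edelstein type fixed point lemma. -/
lemma edelstein {f : ℂ → ℂ} {K : Set ℂ} {d R : ℝ} (hd : 0 < d) (hK : IsCompact K) (hne : K.Nonempty)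
    (hKi : ∀ a ∈ K, d ≤ a.im) (hKR : ∀ a ∈ K, a.im ≤ R) (hm : ∀ a ∈ K, f a ∈ K)
    (hc : ∀ a ∈ K, ∀ b ∈ K, ∀ k, 0 < k → PK k a b → PS k (f a) (f b)) :
    ∃ a ∈ K, f a = a := by
  have hpos : ∀ a ∈ K, 0 < a.im := fun a ha => hd.trans_le (hKi a ha)
  have hR : 0 ≤ R := by
    obtain ⟨a, ha⟩ := hne
    exact (hpos a ha).le.trans (hKR a ha)
  have hcont : ContinuousOn f K := by
    have : LipschitzOnWith (Real.toNNReal (R / d)) f K := by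
      refine LipschitzOnWith.of_dist_le_mul fun a ha b hb => ?_
      rw [Real.coe_toNNReal _ (by positivity), dist_eq_norm, dist_eq_norm]
      by_cases hab : a = b
      · simp [hab]
      have h1 := (hc a ha b hb _ (DD_pos (hpos a ha) (hpos b hb) hab)
        (PK_DD (hpos a ha) (hpos b hb))).pk
      unfold PK DD at h1
      have h2 : ‖f a - f b‖ ^ 2 ≤ (R / d * ‖a - b‖) ^ 2 := by
        refine h1.trans ?_
        rw [mul_pow, div_pow, div_mul_eq_mul_div, div_mul_eq_mul_div, mul_comm (R ^ 2)]
        have e1 : (f a).im * (f b).im ≤ R ^ 2 := by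
          rw [sq]
          exact mul_le_mul (hKR _ (hm a ha)) (hKR _ (hm b hb)) (hpos _ (hm b hb)).le hR
        have e2 : d ^ 2 ≤ a.im * b.im := by
          rw [sq]
          exact mul_le_mul (hKi _ ha) (hKi _ hb) hd.le (hpos a ha).le
        gcongr
      exact (abs_le_of_sq_le_sq' h2 (by positivity)).2
    exact this.continuousOn
  have hF : ContinuousOn (fun a => DD a (f a)) K := by
    unfold DD
    refine ContinuousOn.div ?_ ?_ ?_
    · exact ((continuousOn_id.sub hcont).norm).pow 2
    · exact Complex.continuous_im.continuousOn.mul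
        (Complex.continuous_im.comp_continuousOn hcont)
    · intro a ha
      have := hpos a ha
      have := hpos _ (hm a ha)
      positivity
  obtain ⟨a, ha, hmin⟩ := hK.exists_isMinOn hne hF
  refine ⟨a, ha, ?_⟩
  by_contra hne'
  have h1 := hc a ha _ (hm a ha) _ (DD_pos (hpos a ha) (hpos _ (hm a ha)) (Ne.symm hne'))
    (PK_DD (hpos a ha) (hpos _ (hm a ha)))
  rw [PS_iff (hpos _ (hm a ha)) (hpos _ (hm _ (hm a ha)))] at h1
  exact absurd (hmin (hm a ha)) (not_le.mpr h1)

/-- Approximate fixed points. -/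
lemma approx_fixed {f : ℂ → ℂ} (hf : ∀ a, 0 < a.im → 0 < (f a).im)
    (hc : ∀ a b k, 0 ≤ k → 0 < a.im → 0 < b.im → PK k a b → PK k (f a) (f b)) {d : ℝ} (hd : 0 < d) :
    ∃ s : ℂ, 0 < s.im ∧ s = JJ (JJ (f s + d * Complex.I) + d * Complex.I) := by
  have him : ∀ a : ℂ, (a + d * Complex.I).im = a.im + d := by intro a; simp
  have strict : ∀ a b : ℂ, ∀ k, 0 < k → 0 < a.im → 0 < b.im → PK k a b →
      PS k (a + d * Complex.I) (b + d * Complex.I) := by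
    intro a b k hk ha hb h
    unfold PK PS at *
    rw [him, him, add_sub_add_right_eq_sub]
    refine h.trans_lt ?_
    have : a.im * b.im < (a.im + d) * (b.im + d) := by nlinarith
    gcongr
  let K : Set ℂ := Metric.closedBall 0 (1 / d + d) ∩ {a | d ≤ a.im}
  have hKc : IsCompact K :=
    (isCompact_closedBall _ _).inter_right (isClosed_le continuous_const Complex.continuous_im)
  have hpos : ∀ a ∈ K, 0 < a.im := fun a ha => hd.trans_le ha.2
  have hpp : ∀ a : ℂ, 0 < a.im → 0 < (f (JJ a) + d * Complex.I).im := by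
    intro a ha
    rw [him]
    have := hf _ (JJ_pos ha)
    positivity
  obtain ⟨q, hq, hq'⟩ := edelstein (f := fun q => JJ (f (JJ q) + d * Complex.I) + d * Complex.I)
    (K := K) (d := d) (R := 1 / d + d) hd hKc
    ⟨d * Complex.I, by
      constructor
      · simp [abs_of_pos hd]; positivity
      · simp⟩
    (fun a ha => ha.2) (fun a ha => (im_le_norm a).trans (by simpa using ha.1))
    (fun a ha => by
      have h1 := hpp a (hpos a ha)
      constructor
      · rw [mem_closedBall_zero_iff]
        refine (norm_add_le _ _).trans ?_
        have h2 : ‖(d : ℂ) * Complex.I‖ = d := by simp [abs_of_pos hd]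
        rw [h2]
        gcongr
        refine JJ_norm_le hd ?_
        rw [him]
        linarith [hf _ (JJ_pos (hpos a ha))]
      · show d ≤ _
        rw [him]
        linarith [JJ_pos h1])
    (fun a ha b hb k hk h => by
      have ha' := hpos a ha
      have hb' := hpos b hb
      refine strict _ _ _ hk (JJ_pos (hpp a ha')) (JJ_pos (hpp b hb')) ?_
      refine PK.inv (hpp a ha') (hpp b hb') ?_
      exact (strict _ _ _ hk (hf _ (JJ_pos ha')) (hf _ (JJ_pos hb'))
        (hc _ _ _ hk.le (JJ_pos ha') (JJ_pos hb') (h.inv ha' hb'))).pk)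
  refine ⟨JJ q, JJ_pos (hpos q hq), ?_⟩
  exact congrArg JJ hq'.symm

/-- The map `F(X, v)`. -/
noncomputable def FF (α β c : ℝ) (A B : ℂ → ℂ → ℂ) (X v : ℂ) : ℂ :=
  α * A (X + α * v) (c + β * v) + β * B (X + α * v) (c + β * v)

section step
variable {α β c : ℝ} {A B : ℂ → ℂ → ℂ}

lemma arg1_im (hα : 0 ≤ α) {X v : ℂ} (hX : 0 < X.im) (hv : 0 ≤ v.im) : 0 < (X + α * v).im := by
  simp; positivity

lemma arg2_im (hβ : 0 < β) {v : ℂ} (hv : 0 < v.im) : 0 < ((c : ℂ) + β * v).im := by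
  simp; positivity

lemma FF_ge (G : Good A B) (hα : 0 ≤ α) (hβ : 0 < β) {X v : ℂ} (hX : 0 < X.im) (hv : 0 < v.im) :
    β * (B (X + α * v) (c + β * v)).im ≤ (FF α β c A B X v).im := by
  have := G.imA _ _ (arg1_im hα hX hv.le) (arg2_im (c := c) hβ hv)
  unfold FF
  simp only [Complex.add_im, Complex.im_ofReal_mul]
  have := mul_nonneg hα this.le
  linarith

lemma FF_im (G : Good A B) (hα : 0 ≤ α) (hβ : 0 < β) {X v : ℂ} (hX : 0 < X.im) (hv : 0 < v.im) :
    0 < (FF α β c A B X v).im := by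
  have := G.imB _ _ (arg1_im hα hX hv.le) (arg2_im (c := c) hβ hv)
  exact (mul_pos hβ this).trans_le (FF_ge G hα hβ hX hv)

lemma FF_bound (G : Good A B) (hα : 0 ≤ α) (hβ : 0 < β) :
    ∃ C : ℝ, 0 < C ∧ ∀ X v : ℂ, 0 < X.im → 0 < v.im → ‖FF α β c A B X v‖ ≤ C / v.im := by
  obtain ⟨C, hC, hB⟩ := G.bB
  refine ⟨1 + C, by positivity, fun X v hX hv => ?_⟩
  have h1 := G.bA _ _ (arg1_im hα hX hv.le) (arg2_im (c := c) hβ hv)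
  have h2 := hB _ _ (arg1_im hα hX hv.le) (arg2_im (c := c) hβ hv)
  unfold FF
  refine (norm_add_le _ _).trans ?_
  rw [norm_mul, norm_mul, Complex.norm_real, Complex.norm_real, Real.norm_of_nonneg hα,
    Real.norm_of_nonneg hβ.le, add_div]
  have e1 : (X + α * v).im = X.im + α * v.im := by simp
  have e2 : ((c : ℂ) + β * v).im = β * v.im := by simp
  rw [e1] at h1
  rw [e2] at h2
  gcongr
  · refine (mul_le_mul_of_nonneg_left h1 hα).trans ?_
    rw [mul_one_div, div_le_div_iff₀ (by positivity) hv]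
    linarith
  · refine (mul_le_mul_of_nonneg_left h2 hβ.le).trans ?_
    apply le_of_eq; field_simp

lemma FF_pk (G : Good A B) (hα : 0 ≤ α) (hβ : 0 < β) {k : ℝ} (hk : 0 ≤ k) {X X' v v' : ℂ}
    (hX : 0 < X.im) (hv : 0 < v.im) (hX' : 0 < X'.im) (hv' : 0 < v'.im)
    (h1 : PK k X X') (h2 : PK k v v') : PK k (FF α β c A B X v) (FF α β c A B X' v') := by
  have a1 := arg1_im hα hX hv.le
  have a2 := arg2_im (c := c) hβ hv
  have b1 := arg1_im hα hX' hv'.le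
  have b2 := arg2_im (c := c) hβ hv'
  have p1 : PK k (X + α * v) (X' + α * v') :=
    PK.add hk hX.le hX'.le (by simp; positivity) (by simp; positivity) h1 (h2.smul α)
  have p2 : PK k ((c : ℂ) + β * v) (c + β * v') := (h2.smul β).shift c
  have iA := G.imA _ _ a1 a2
  have iA' := G.imA _ _ b1 b2
  have iB := G.imB _ _ a1 a2
  have iB' := G.imB _ _ b1 b2
  exact PK.add hk (by rw [Complex.im_ofReal_mul]; positivity) (by rw [Complex.im_ofReal_mul]; positivity)
    (by rw [Complex.im_ofReal_mul]; positivity) (by rw [Complex.im_ofReal_mul]; positivity)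
    ((G.pA _ _ _ _ _ hk a1 a2 b1 b2 p1 p2).smul α) ((G.pB _ _ _ _ _ hk a1 a2 b1 b2 p1 p2).smul β)

lemma FF_ps (G : Good A B) (hα : 0 ≤ α) (hβ : 0 < β) {k : ℝ} (hk : 0 < k) {X X' v v' : ℂ}
    (hX : 0 < X.im) (hv : 0 < v.im) (hX' : 0 < X'.im) (hv' : 0 < v'.im)
    (h1 : PS k X X') (h2 : PK k v v') : PS k (FF α β c A B X v) (FF α β c A B X' v') := by
  have a1 := arg1_im hα hX hv.le
  have a2 := arg2_im (c := c) hβ hv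
  have b1 := arg1_im hα hX' hv'.le
  have b2 := arg2_im (c := c) hβ hv'
  have p1 : PS k (X + α * v) (X' + α * v') :=
    PS.add hk.le hX.le hX'.le (by simp; positivity) (by simp; positivity) h1 (h2.smul α)
  have p2 : PK k ((c : ℂ) + β * v) (c + β * v') := (h2.smul β).shift c
  have iA := G.imA _ _ a1 a2
  have iA' := G.imA _ _ b1 b2
  have iB := G.imB _ _ a1 a2
  have iB' := G.imB _ _ b1 b2
  unfold FF
  rw [add_comm, add_comm ((α : ℂ) * A (X' + α * v') (c + β * v'))]
  exact PS.add hk.le (by rw [Complex.im_ofReal_mul]; positivity)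
    (by rw [Complex.im_ofReal_mul]; positivity)
    (by rw [Complex.im_ofReal_mul]; positivity) (by rw [Complex.im_ofReal_mul]; positivity)
    ((G.sB _ _ _ _ _ hk a1 a2 b1 b2 p1 p2).smul hβ)
    ((G.pA _ _ _ _ _ hk.le a1 a2 b1 b2 p1.pk p2).smul α)

lemma FF_cont (G : Good A B) (hα : 0 ≤ α) (hβ : 0 < β) {x v : ℕ → ℂ} {X V : ℂ} (hX : 0 < X.im)
    (hV : 0 < V.im) (hx : ∀ n, 0 < (x n).im) (hv : ∀ n, 0 < (v n).im)
    (tx : Tendsto x atTop (𝓝 X)) (tv : Tendsto v atTop (𝓝 V)) :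
    Tendsto (fun n => FF α β c A B (x n) (v n)) atTop (𝓝 (FF α β c A B X V)) := by
  have h := G.cont (x := fun n => x n + α * v n) (y := fun n => c + β * v n)
    (arg1_im hα hX hV.le) (arg2_im (c := c) hβ hV)
    (fun n => arg1_im hα (hx n) (hv n).le) (fun n => arg2_im hβ (hv n))
    (tx.add (tv.const_mul _)) ((tv.const_mul _).const_add _)
  exact (h.1.const_mul _).add (h.2.const_mul _)

lemma map_im (G : Good A B) (hα : 0 ≤ α) (hβ : 0 < β) {γ : ℝ} (hγ : 0 < γ) {X w : ℂ} (hX : 0 < X.im)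
    (hw : 0 ≤ w.im) {a : ℂ} (ha : 0 < a.im) : 0 < (w + γ * FF α β c A B X (JJ a)).im := by
  have := FF_im (c := c) G hα hβ hX (JJ_pos ha)
  rw [Complex.add_im, Complex.im_ofReal_mul]
  positivity

lemma map_pk (G : Good A B) (hα : 0 ≤ α) (hβ : 0 < β) {γ : ℝ} (hγ : 0 < γ) {X w : ℂ} (hX : 0 < X.im)
    (hw : 0 ≤ w.im) {a b : ℂ} (ha : 0 < a.im) (hb : 0 < b.im) {k : ℝ} (hk : 0 ≤ k) (h : PK k a b) :
    PK k (w + γ * FF α β c A B X (JJ a)) (w + γ * FF α β c A B X (JJ b)) := by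
  have h1 := FF_im (c := c) G hα hβ hX (JJ_pos ha)
  have h2 := FF_im (c := c) G hα hβ hX (JJ_pos hb)
  exact PK.add hk hw hw (by rw [Complex.im_ofReal_mul]; positivity)
    (by rw [Complex.im_ofReal_mul]; positivity) (PK.refl hk _)
    ((FF_pk G hα hβ hk hX (JJ_pos ha) hX (JJ_pos hb) (PK.refl hk _) (h.inv ha hb)).smul γ)

lemma map_julia (G : Good A B) (hα : 0 ≤ α) (hβ : 0 < β) {γ : ℝ} (hγ : 0 < γ) {X w : ℂ}
    (hX : 0 < X.im) (hw : 0 ≤ w.im) {a s : ℂ} (ha : 0 < a.im) (hs : 0 < s.im)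
    (h : s = w + γ * FF α β c A B X (JJ s)) :
    ‖s - (w + γ * FF α β c A B X (JJ a))‖ ^ 2 * a.im ≤
      ‖s - a‖ ^ 2 * (w + γ * FF α β c A B X (JJ a)).im := by
  have h1 := map_pk (c := c) G hα hβ hγ hX hw hs ha (DD_nonneg hs ha) (PK_DD hs ha)
  rw [← h] at h1
  unfold PK DD at h1
  have e : ‖s - a‖ ^ 2 / (s.im * a.im) * (s.im * (w + γ * FF α β c A B X (JJ a)).im) =
    (‖s - a‖ ^ 2 * (w + γ * FF α β c A B X (JJ a)).im) / a.im := by field_simp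
  rw [e] at h1
  rwa [le_div_iff₀ ha] at h1

lemma tendsto_inv_nat : Tendsto (fun n : ℕ => (1 : ℝ) / ((n : ℝ) + 1)) atTop (𝓝 0) :=
  tendsto_one_div_add_atTop_nhds_zero_nat

lemma exclude_inf (G : Good A B) (hα : 0 ≤ α) (hβ : 0 < β) {γ : ℝ} (hγ : 0 < γ) {X w : ℂ}
    (hX : 0 < X.im)
    (h : ∀ a : ℂ, 0 < a.im → a.im ≤ (w + γ * FF α β c A B X (JJ a)).im) : False := by
  let v : ℕ → ℂ := fun n => ((1 / ((n : ℝ) + 1) : ℝ) : ℂ) * Complex.I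
  have hvi : ∀ n, (v n).im = 1 / ((n : ℝ) + 1) := by intro n; simp only [v, Complex.im_ofReal_mul]; simp
  have hv : ∀ n, 0 < (v n).im := by intro n; rw [hvi]; positivity
  have tv : Tendsto v atTop (𝓝 0) := by
    have := ((Complex.continuous_ofReal.tendsto _).comp tendsto_inv_nat).mul_const Complex.I
    simpa [v] using this
  have hvn : ∀ n, ‖v n‖ = (v n).im := by
    intro n; rw [hvi]; simp only [v, norm_mul, Complex.norm_real, Complex.norm_I, mul_one]
    rw [Real.norm_of_nonneg (by positivity)]
  clear_value v
  have hx := fun n => arg1_im hα hX (hv n).le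
  have hy := fun n => arg2_im (c := c) hβ (hv n)
  obtain ⟨φ, hφ, h1, -⟩ := G.nt (fun n => X + α * v n) (fun n => c + β * v n) X c 1 hX hx hy
    (by simpa using (tv.const_mul (α : ℂ)).const_add X)
    (by simpa using (tv.const_mul (β : ℂ)).const_add (c : ℂ))
    (by intro n; simp [hvn, abs_of_pos hβ])
  have tv' := tv.comp hφ.tendsto_atTop
  -- v * F → 0
  have hA : Tendsto (fun n => v (φ n) * (α * A (X + α * v (φ n)) (c + β * v (φ n)))) atTop (𝓝 0) := by
    rw [tendsto_zero_iff_norm_tendsto_zero]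
    have : Tendsto (fun n => ‖v (φ n)‖ * (α * (1 / X.im))) atTop (𝓝 0) := by
      simpa using tv'.norm.mul_const (α * (1 / X.im))
    refine squeeze_zero (fun n => norm_nonneg _) (fun n => ?_) this
    rw [norm_mul, norm_mul, Complex.norm_real, Real.norm_of_nonneg hα]
    gcongr
    refine (G.bA _ _ (hx _) (hy _)).trans ?_
    apply one_div_le_one_div_of_le hX
    have := (hv (φ n)).le
    simp only [Complex.add_im, Complex.im_ofReal_mul]
    nlinarith
  have hF : Tendsto (fun n => v (φ n) * (w + γ * FF α β c A B X (v (φ n)))) atTop (𝓝 0) := by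
    have := (tv'.mul_const w).add ((hA.add h1).const_mul (γ : ℂ))
    simp only [zero_mul, add_zero, mul_zero] at this
    refine this.congr fun n => ?_
    simp only [FF, Function.comp]
    ring
  have h2 := (tendsto_zero_iff_norm_tendsto_zero.mp hF)
  have h3 : (1 : ℝ) ≤ 0 := by
    refine ge_of_tendsto' h2 fun n => ?_
    have h4 := h (JJ (v (φ n))) (JJ_pos (hv _))
    rw [JJ_JJ, JJ_im, hvn] at h4
    have h5 := h4.trans (im_le_norm _)
    rw [norm_mul, hvn]
    have := hv (φ n)
    rw [div_le_iff₀ (by positivity)] at h5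
    nlinarith
  linarith

lemma exclude_zero (G : Good A B) (hα : 0 ≤ α) (hβ : 0 < β) {γ : ℝ} (hγ : 0 < γ) {X w : ℂ}
    (hX : 0 < X.im) (hw : 0 ≤ w.im) (hw0 : w ≠ 0)
    (h : ∀ a : ℂ, 0 < a.im → ‖w + γ * FF α β c A B X (JJ a)‖ ^ 2 * a.im ≤
      ‖a‖ ^ 2 * (w + γ * FF α β c A B X (JJ a)).im) : False := by
  obtain ⟨C, hC, hF⟩ := FF_bound (c := c) G hα hβ
  have key : ∀ r : ℝ, 0 < r → ‖w‖ ≤ r * (1 + γ * C) := by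
    intro r hr
    have hi : (r * Complex.I).im = r := by simp
    have hn : ‖(r : ℂ) * Complex.I‖ = r := by simp [abs_of_pos hr]
    have hp : 0 < ((r : ℂ) * Complex.I).im := by rw [hi]; exact hr
    have h1 := h (r * Complex.I) hp
    rw [hi, hn] at h1
    have h0 := map_im (c := c) G hα hβ hγ hX hw hp
    have h2 := hF X _ hX (JJ_pos hp)
    rw [JJ_im, hi, hn] at h2
    set T := FF α β c A B X (JJ (r * Complex.I))
    have h3 := im_le_norm (w + γ * T)
    have h4 : ‖w + γ * T‖ ≤ r := by
      have hpos : 0 < ‖w + γ * T‖ := h0.trans_le h3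
      have : ‖w + γ * T‖ * (‖w + γ * T‖ * r) ≤ r * (‖w + γ * T‖ * r) := by nlinarith
      exact le_of_mul_le_mul_right this (by positivity)
    have h5 : ‖w‖ ≤ ‖w + γ * T‖ + γ * ‖T‖ := by
      have : w = (w + γ * T) - γ * T := by ring
      calc ‖w‖ = ‖(w + γ * T) - γ * T‖ := by rw [← this]
        _ ≤ _ := norm_sub_le _ _
        _ = _ := by rw [norm_mul, Complex.norm_real, Real.norm_of_nonneg hγ.le]
    have h6 : C / (r / r ^ 2) = C * r := by field_simp
    rw [h6] at h2
    nlinarith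
  have hwp := norm_pos_iff.mpr hw0
  have := key (‖w‖ / (2 * (1 + γ * C))) (by positivity)
  rw [div_mul_eq_mul_div, le_div_iff₀ (by positivity)] at this
  have h7 : 0 < 1 + γ * C := by positivity
  nlinarith [mul_pos hwp h7]

lemma exclude_real (G : Good A B) (hα : 0 ≤ α) (hβ : 0 < β) {γ : ℝ} (hγ : 0 < γ) {X w : ℂ}
    (hX : 0 < X.im) (hw : 0 ≤ w.im) {p : ℝ} (hp : p ≠ 0)
    (h : ∀ a : ℂ, 0 < a.im → ‖p - (w + γ * FF α β c A B X (JJ a))‖ ^ 2 * a.im ≤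
      ‖p - a‖ ^ 2 * (w + γ * FF α β c A B X (JJ a)).im) : False := by
  let a : ℕ → ℂ := fun n => p + ((1 / ((n : ℝ) + 1) : ℝ) : ℂ) * Complex.I
  have hai : ∀ n, (a n).im = 1 / ((n : ℝ) + 1) := by
    intro n; simp only [a, Complex.add_im, Complex.im_ofReal_mul]; simp
  have ha : ∀ n, 0 < (a n).im := by intro n; rw [hai]; positivity
  have hpa : ∀ n, ‖(p : ℂ) - a n‖ = (a n).im := by
    intro n
    rw [hai]
    simp only [a, sub_add_cancel_left, norm_neg, norm_mul, Complex.norm_real, Complex.norm_I, mul_one]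
    rw [Real.norm_of_nonneg (by positivity)]
  have ta : Tendsto a atTop (𝓝 (p : ℂ)) := by
    have := (((Complex.continuous_ofReal.tendsto _).comp tendsto_inv_nat).mul_const
      Complex.I).const_add (p : ℂ)
    simpa [a] using this
  have hpc : (p : ℂ) ≠ 0 := by exact_mod_cast hp
  have tv := JJ_tendsto ta hpc
  have hv := fun n => JJ_pos (ha n)
  have hx := fun n => arg1_im hα hX (hv n).le
  have hy := fun n => arg2_im (c := c) hβ (hv n)
  have hJp : JJ p = ((-p⁻¹ : ℝ) : ℂ) := by simp [JJ]
  have hnorm : ∀ n, ‖a n‖ ≤ |p| + 1 := by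
    intro n
    refine (norm_add_le _ _).trans ?_
    simp only [norm_mul, Complex.norm_real, Complex.norm_I, mul_one, Real.norm_eq_abs]
    gcongr
    rw [abs_of_nonneg (by positivity), div_le_one (by positivity)]
    linarith [(Nat.cast_nonneg n : (0 : ℝ) ≤ n)]
  obtain ⟨φ, hφ, -, κ, hκ, h1⟩ := G.nt (fun n => X + α * JJ (a n)) (fun n => c + β * JJ (a n))
    (X + α * JJ p) (c + β * (-p⁻¹)) ((|p| + 1) / |p|) (arg1_im hα hX (by rw [hJp]; simp)) hx hy
    ((tv.const_mul _).const_add _)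
    (by
      have := (tv.const_mul (β : ℂ)).const_add (c : ℂ)
      rw [hJp] at this
      push_cast at this ⊢
      exact this)
    (by
      intro n
      have h0 := ne_of_im (ha n)
      have e : (c : ℂ) + β * JJ (a n) - ((c + β * (-p⁻¹) : ℝ) : ℂ) = β * (JJ (a n) - JJ p) := by
        rw [hJp]; push_cast; ring
      have hs : ‖JJ (a n) - JJ p‖ = (a n).im / (‖a n‖ * |p|) := by
        have : JJ (a n) - JJ p = -(p - a n) / (a n * p) := by
          unfold JJ; field_simp; ring
        rw [this, norm_div, norm_neg, hpa, norm_mul, Complex.norm_real, Real.norm_eq_abs]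
      rw [e, norm_mul, Complex.norm_real, Real.norm_of_nonneg hβ.le, hs]
      simp only [Complex.add_im, Complex.im_ofReal_mul, Complex.ofReal_im, zero_add, JJ_im]
      have h2 := norm_pos_iff.mpr h0
      have h3 := abs_pos.mpr hp
      have e3 : (|p| + 1) / |p| * (β * ((a n).im / ‖a n‖ ^ 2)) =
        β * ((a n).im / (‖a n‖ * |p|)) * ((|p| + 1) / ‖a n‖) := by field_simp
      rw [e3]
      refine le_mul_of_one_le_right ?_ ?_
      · have := ha n; positivity
      · rw [one_le_div h2]; exact hnorm n)
  have ta' : Tendsto (fun n => (a (φ n)).im) atTop (𝓝 0) := by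
    have := (Complex.continuous_im.tendsto _).comp (ta.comp hφ.tendsto_atTop)
    simpa [Function.comp_def] using this
  have h3 : γ * (β * κ) ≤ 0 := by
    refine ge_of_tendsto ta' ?_
    filter_upwards [h1] with n hn
    have h4 := h _ (ha (φ n))
    have h0 := map_im (c := c) G hα hβ hγ hX hw (ha (φ n))
    have h5 := FF_ge (c := c) G hα hβ hX (hv (φ n))
    rw [hpa] at h4
    set T := FF α β c A B X (JJ (a (φ n)))
    have him : (w + γ * T).im = w.im + γ * T.im := by simp
    have h6 : (w + γ * T).im ≤ ‖p - (w + γ * T)‖ := by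
      have := im_le_norm (-(p - (w + γ * T)))
      rw [norm_neg] at this
      simpa using this
    have hpos := h0.trans_le h6
    have h7 : ‖p - (w + γ * T)‖ ≤ (a (φ n)).im := by
      have := ha (φ n)
      set q := ‖p - (w + γ * T)‖
      have : q * (q * (a (φ n)).im) ≤ (a (φ n)).im * (q * (a (φ n)).im) := by nlinarith
      exact le_of_mul_le_mul_right this (by positivity)
    have h8 : β * κ ≤ T.im := (mul_le_mul_of_nonneg_left hn hβ.le).trans h5
    have h9 := mul_le_mul_of_nonneg_left h8 hγ.le
    linarith
  have : 0 < γ * (β * κ) := by positivity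
  linarith

lemma exclude (G : Good A B) (hα : 0 ≤ α) (hβ : 0 < β) {γ : ℝ} (hγ : 0 < γ) {X w : ℂ}
    (hX : 0 < X.im) (hw : 0 ≤ w.im) (hw0 : w ≠ 0) {f : ℕ → ℂ → ℂ} {s : ℕ → ℂ}
    (hs : ∀ n, 0 < (s n).im)
    (hf : ∀ n a, 0 < a.im → ‖s n - f n a‖ ^ 2 * a.im ≤ ‖s n - a‖ ^ 2 * (f n a).im)
    (hfg : ∀ a, 0 < a.im →
      Tendsto (fun n => f n a) atTop (𝓝 (w + γ * FF α β c A B X (JJ a)))) :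
    ∃ φ : ℕ → ℕ, ∃ p : ℂ, StrictMono φ ∧ Tendsto (s ∘ φ) atTop (𝓝 p) ∧ 0 < p.im ∧
      w + γ * FF α β c A B X (JJ p) = p := by
  rcases julia hs hf (fun a ha => map_im (c := c) G hα hβ hγ hX hw ha) hfg with h | ⟨p, h⟩ | h
  · exact h
  · exfalso
    by_cases hp : p = 0
    · subst hp
      refine exclude_zero (c := c) G hα hβ hγ hX hw hw0 fun a ha => ?_
      have := h a ha
      simp only [Complex.ofReal_zero, zero_sub, norm_neg] at this
      exact this
    · exact exclude_real G hα hβ hγ hX hw hp h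
  · exact (exclude_inf G hα hβ hγ hX h).elim

lemma exists_sol (G : Good A B) (hα : 0 ≤ α) (hβ : 0 < β) {γ : ℝ} (hγ : 0 < γ) {X w : ℂ}
    (hX : 0 < X.im) (hw : 0 ≤ w.im) (hw0 : w ≠ 0) :
    ∃ s : ℂ, 0 < s.im ∧ s = w + γ * FF α β c A B X (JJ s) := by
  let g : ℂ → ℂ := fun a => w + γ * FF α β c A B X (JJ a)
  let d : ℕ → ℝ := fun n => 1 / ((n : ℝ) + 1)
  have hd : ∀ n, 0 < d n := by intro n; simp only [d]; positivity
  have hg : ∀ a, 0 < a.im → 0 < (g a).im := fun a ha => map_im G hα hβ hγ hX hw ha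
  have hgp : ∀ a b k, 0 ≤ k → 0 < a.im → 0 < b.im → PK k a b → PK k (g a) (g b) :=
    fun a b k hk ha hb h => map_pk G hα hβ hγ hX hw ha hb hk h
  choose s hs hs' using fun n => approx_fixed hg hgp (hd n)
  have p1 : ∀ n (a : ℂ), 0 < a.im → 0 < (a + d n * Complex.I).im := by
    intro n a ha; have := hd n; simp; positivity
  have pk1 : ∀ n (a b : ℂ) (k : ℝ), 0 ≤ k → 0 < a.im → 0 < b.im → PK k a b →
      PK k (a + d n * Complex.I) (b + d n * Complex.I) := by
    intro n a b k hk ha hb h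
    have : 0 ≤ ((d n : ℂ) * Complex.I).im := by simp [(hd n).le]
    exact PK.add hk ha.le hb.le this this h (PK.refl hk _)
  have td : Tendsto (fun n => (d n : ℂ) * Complex.I) atTop (𝓝 0) := by
    have := ((Complex.continuous_ofReal.tendsto _).comp tendsto_inv_nat).mul_const Complex.I
    simpa [d] using this
  obtain ⟨φ, p, -, -, h1, h2⟩ := exclude (c := c) G hα hβ hγ hX hw hw0
    (f := fun n a => JJ (JJ (g a + d n * Complex.I) + d n * Complex.I)) (s := s) hs
    (by
      intro n a ha
      have hn := hs n
      have e1 := p1 n _ (hg _ hn)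
      have e2 := p1 n _ (hg _ ha)
      have k0 := DD_nonneg hn ha
      have hk := (pk1 n _ _ _ k0 (JJ_pos e1) (JJ_pos e2)
        ((pk1 n _ _ _ k0 (hg _ hn) (hg _ ha) (hgp _ _ _ k0 hn ha (PK_DD hn ha))).inv e1 e2)).inv
          (p1 n _ (JJ_pos e1)) (p1 n _ (JJ_pos e2))
      rw [← hs' n] at hk
      have h0 := JJ_pos (p1 n _ (JJ_pos e2))
      set q := JJ (JJ (g a + d n * Complex.I) + d n * Complex.I)
      unfold PK DD at hk
      have e : ‖s n - a‖ ^ 2 / ((s n).im * a.im) * ((s n).im * q.im) =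
        (‖s n - a‖ ^ 2 * q.im) / a.im := by field_simp
      rw [e] at hk
      rwa [le_div_iff₀ ha] at hk)
    (by
      intro a ha
      have t1 := JJ_tendsto (td.const_add (g a)) (by simpa using ne_of_im (hg a ha))
      have t2 := JJ_tendsto (t1.add td) (by
        simpa using ne_of_im (JJ_pos (hg a ha)))
      simp only [add_zero, JJ_JJ] at t2
      exact t2)
  exact ⟨p, h1, h2.symm⟩

lemma unique_sol (G : Good A B) (hα : 0 ≤ α) (hβ : 0 < β) {γ : ℝ} (hγ : 0 < γ) {X w : ℂ}
    (hX : 0 < X.im) (hw : 0 ≤ w.im) {s s' : ℂ} (hs : 0 < s.im) (hs' : 0 < s'.im)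
    (h : s = w + γ * FF α β c A B X (JJ s)) (h' : s' = w + γ * FF α β c A B X (JJ s')) :
    s = s' := by
  by_contra hne
  have hk := DD_pos hs hs' hne
  have h1 := (FF_ps (c := c) G hα hβ hk hX (JJ_pos hs) hX (JJ_pos hs') (PS.refl hk hX)
    ((PK_DD hs hs').inv hs hs')).smul hγ
  have i1 := FF_im (c := c) G hα hβ hX (JJ_pos hs)
  have i2 := FF_im (c := c) G hα hβ hX (JJ_pos hs')
  have h2 := PS.add hk.le (by rw [Complex.im_ofReal_mul]; positivity)
    (by rw [Complex.im_ofReal_mul]; positivity) hw hw h1 (PK.refl hk.le w)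
  rw [add_comm, ← h, add_comm, ← h', PS_iff hs hs'] at h2
  exact lt_irrefl _ h2

end step

section step2
variable {α β c : ℝ} {A B : ℂ → ℂ → ℂ}

lemma PK.mono {k k' : ℝ} {a b : ℂ} (ha : 0 ≤ a.im) (hb : 0 ≤ b.im) (hk : k ≤ k') (h : PK k a b) :
    PK k' a b := by
  unfold PK at *
  refine h.trans ?_
  gcongr

lemma S_pk (G : Good A B) (hα : 0 ≤ α) (hβ : 0 < β) {γ : ℝ} (hγ : 0 < γ) {X Y X' Y' s s' : ℂ}
    (hX : 0 < X.im) (hY : 0 < Y.im) (hX' : 0 < X'.im) (hY' : 0 < Y'.im) (hs : 0 < s.im)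
    (hs' : 0 < s'.im)
    (h : s = JJ Y + γ * FF α β c A B X (JJ s)) (h' : s' = JJ Y' + γ * FF α β c A B X' (JJ s'))
    {k : ℝ} (hk : 0 ≤ k) (h1 : PK k X X') (h2 : PK k Y Y') : PK k s s' := by
  rw [PK_iff hs hs']
  by_contra hlt
  push Not at hlt
  have hD := hk.trans_lt hlt
  have i1 := FF_im (c := c) G hα hβ hX (JJ_pos hs)
  have i2 := FF_im (c := c) G hα hβ hX' (JJ_pos hs')
  have p1 := (FF_pk (c := c) G hα hβ hD.le hX (JJ_pos hs) hX' (JJ_pos hs')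
    (h1.mono hX.le hX'.le hlt.le) ((PK_DD hs hs').inv hs hs')).smul γ
  have p2 : PS (DD s s') (JJ Y) (JJ Y') := by
    rw [PS_iff (JJ_pos hY) (JJ_pos hY')]
    exact ((PK_iff (JJ_pos hY) (JJ_pos hY')).1 (h2.inv hY hY')).trans_lt hlt
  have h3 := PS.add hD.le (JJ_pos hY).le (JJ_pos hY').le (by rw [Complex.im_ofReal_mul]; positivity)
    (by rw [Complex.im_ofReal_mul]; positivity) p2 p1
  rw [← h, ← h', PS_iff hs hs'] at h3
  exact lt_irrefl _ h3

lemma B_form {γ : ℝ} {y T s : ℂ} (hy : y ≠ 0) (hT : T ≠ 0) (h : s = JJ y + γ * T) :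
    γ * y + JJ T = y * s / T := by
  rw [h]; unfold JJ; field_simp; ring

lemma nt_zero (G : Good A B) (hα : 0 ≤ α) (hβ : 0 < β) {γ : ℝ} (hγ : 0 < γ)
    {x y s : ℕ → ℂ} {X : ℂ} {M : ℝ} (hX : 0 < X.im) (hx : ∀ n, 0 < (x n).im)
    (hy : ∀ n, 0 < (y n).im) (hs : ∀ n, 0 < (s n).im)
    (h : ∀ n, s n = JJ (y n) + γ * FF α β c A B (x n) (JJ (s n)))
    (tx : Tendsto x atTop (𝓝 X)) (ty : Tendsto y atTop (𝓝 0)) (hM : ∀ n, ‖y n‖ ≤ M * (y n).im) :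
    ∃ φ : ℕ → ℕ, StrictMono φ ∧
      Tendsto (fun n => y (φ n) * JJ (γ * y (φ n) +
        JJ (FF α β c A B (x (φ n)) (JJ (s (φ n)))))) atTop (𝓝 0) ∧
      ∃ κ : ℝ, 0 < κ ∧ ∀ᶠ n in atTop, κ ≤ (JJ (γ * y (φ n) +
        JJ (FF α β c A B (x (φ n)) (JJ (s (φ n)))))).im := by
  have hM0 : 0 ≤ M := by
    by_contra hlt
    push Not at hlt
    have := hM 0
    nlinarith [norm_nonneg (y 0), hy 0]
  have hax := fun n => arg1_im hα (hx n) (hy n).le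
  have hay := fun n => arg2_im (c := c) hβ (hy n)
  obtain ⟨φ, hφ, h1, κ, hκ, h2⟩ := G.nt (fun n => x n + α * y n) (fun n => c + β * y n) X c M hX hax hay
    (by simpa using tx.add (ty.const_mul (α : ℂ)))
    (by simpa using (ty.const_mul (β : ℂ)).const_add (c : ℂ))
    (by
      intro n
      simp [abs_of_pos hβ]
      nlinarith [mul_le_mul_of_nonneg_left (hM n) hβ.le])
  refine ⟨φ, hφ, ?_⟩
  have ty' := ty.comp hφ.tendsto_atTop
  have tx' := (Complex.continuous_im.tendsto _).comp (tx.comp hφ.tendsto_atTop)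
  let P : ℕ → ℂ := fun n => FF α β c A B (x (φ n)) (y (φ n))
  let T : ℕ → ℂ := fun n => FF α β c A B (x (φ n)) (JJ (s (φ n)))
  have hP : ∀ n, 0 < (P n).im := fun n => FF_im G hα hβ (hx _) (hy _)
  have hT : ∀ n, 0 < (T n).im := fun n => FF_im G hα hβ (hx _) (JJ_pos (hs _))
  have hA : Tendsto (fun n => y (φ n) * (α * A (x (φ n) + α * y (φ n)) (c + β * y (φ n)))) atTop
      (𝓝 0) := by
    rw [tendsto_zero_iff_norm_tendsto_zero]
    have : Tendsto (fun n => ‖y (φ n)‖ * (α * (1 / (x (φ n)).im))) atTop (𝓝 0) := by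
      have := ty'.norm.mul ((tx'.inv₀ hX.ne').const_mul α)
      simpa [Function.comp_def] using this
    refine squeeze_zero (fun n => norm_nonneg _) (fun n => ?_) this
    rw [norm_mul, norm_mul, Complex.norm_real, Real.norm_of_nonneg hα]
    gcongr
    refine (G.bA _ _ (hax _) (hay _)).trans ?_
    apply one_div_le_one_div_of_le (hx _)
    have := (hy (φ n)).le
    simp only [Complex.add_im, Complex.im_ofReal_mul]
    nlinarith
  have hyP : Tendsto (fun n => y (φ n) * (γ * P n)) atTop (𝓝 0) := by
    have := (hA.add h1).const_mul (γ : ℂ)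
    simp only [add_zero, mul_zero] at this
    refine this.congr fun n => ?_
    simp only [FF, P]
    ring
  have hyPn : Tendsto (fun n => ‖y (φ n) * (γ * P n)‖) atTop (𝓝 0) :=
    tendsto_zero_iff_norm_tendsto_zero.mp hyP
  have hsub : ∀ n, s (φ n) - JJ (y (φ n)) = γ * T n := by
    intro n; nth_rewrite 1 [h]; simp only [T]; ring
  have hsim : ∀ n, (s (φ n)).im = (JJ (y (φ n))).im + γ * (T n).im := by
    intro n
    have := congrArg Complex.im (hsub n)
    rw [Complex.sub_im, Complex.im_ofReal_mul] at this
    linarith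
  have hpk : ∀ n, PK (DD (s (φ n)) (JJ (y (φ n)))) (T n) (P n) := by
    intro n
    have a1 := hs (φ n)
    have a2 := JJ_pos (hy (φ n))
    have := FF_pk (c := c) G hα hβ (DD_nonneg a1 a2) (hx (φ n)) (JJ_pos a1) (hx (φ n)) (JJ_pos a2)
      (PK.refl (DD_nonneg a1 a2) _) ((PK_DD a1 a2).inv a1 a2)
    rw [JJ_JJ] at this
    exact this
  have hnp : ∀ n, 0 < ‖y (φ n)‖ := fun n => norm_pos_iff.mpr (ne_of_im (hy _))
  have hpim : ∀ n, 1 ≤ M * ‖y (φ n)‖ * (JJ (y (φ n))).im := by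
    intro n
    rw [JJ_im]
    have := hnp n
    have e : M * ‖y (φ n)‖ * ((y (φ n)).im / ‖y (φ n)‖ ^ 2) = (M * (y (φ n)).im) / ‖y (φ n)‖ := by
      field_simp
    rw [e, one_le_div this]
    exact hM _
  have hnT : ∀ n, ‖(γ : ℂ) * T n‖ = γ * ‖T n‖ := by
    intro n; rw [norm_mul, Complex.norm_real, Real.norm_of_nonneg hγ.le]
  have hnP : ∀ n, ‖(γ : ℂ) * P n‖ = γ * ‖P n‖ := by
    intro n; rw [norm_mul, Complex.norm_real, Real.norm_of_nonneg hγ.le]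
  have hle : ∀ᶠ n in atTop, ‖T n‖ ≤ 2 * ‖P n‖ := by
    have : Tendsto (fun n => M * ‖y (φ n) * (γ * P n)‖) atTop (𝓝 0) := by
      simpa using hyPn.const_mul M
    filter_upwards [this.eventually (gt_mem_nhds (show (0 : ℝ) < 1 / 4 by norm_num))] with n hn
    have k1 := hpk n
    unfold PK DD at k1
    rw [hsub, hnT] at k1
    have a1 := hs (φ n)
    have a2 := JJ_pos (hy (φ n))
    have a3 := hpim n
    have a4 := hsim n
    rw [norm_mul, hnP] at hn
    set p := (JJ (y (φ n))).im
    set q := (s (φ n)).im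
    have b1 := hT n
    have b2 := hP n
    have b3 := im_le_norm (P n)
    -- ‖T-P‖² ≤ γ²‖T‖²/(q p) * (ImT * ImP) ≤ ‖T‖² γ ImP/p ≤ ‖T‖²/4
    have c1 : γ * (T n).im / q ≤ 1 := by rw [div_le_one a1]; linarith
    have c2 : γ * (P n).im / p ≤ 1 / 4 := by
      rw [div_le_iff₀ a2]
      have : γ * (P n).im ≤ γ * (P n).im * (M * ‖y (φ n)‖ * p) :=
        le_mul_of_one_le_right (by positivity) a3
      have e2 : γ * (P n).im * (M * ‖y (φ n)‖ * p) ≤ M * (‖y (φ n)‖ * (γ * ‖P n‖)) * p := by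
        have : γ * (P n).im * (M * ‖y (φ n)‖ * p) ≤ γ * ‖P n‖ * (M * ‖y (φ n)‖ * p) := by gcongr
        linarith
      have e3 : M * (‖y (φ n)‖ * (γ * ‖P n‖)) * p ≤ 1 / 4 * p := by gcongr
      linarith
    have c3 : (γ * ‖T n‖) ^ 2 / (q * p) * ((T n).im * (P n).im) =
      ‖T n‖ ^ 2 * ((γ * (T n).im / q) * (γ * (P n).im / p)) := by field_simp
    rw [c3] at k1
    have c4 : (γ * (T n).im / q) * (γ * (P n).im / p) ≤ 1 * (1 / 4) := by gcongr
    have c5 : ‖T n - P n‖ ^ 2 ≤ (‖T n‖ / 2) ^ 2 := by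
      refine k1.trans ?_
      calc _ ≤ ‖T n‖ ^ 2 * (1 * (1 / 4)) := by gcongr
        _ = _ := by ring
    have c6 := (abs_le_of_sq_le_sq' c5 (by positivity)).2
    have c7 : ‖T n‖ ≤ ‖T n - P n‖ + ‖P n‖ := by
      simpa using norm_add_le (T n - P n) (P n)
    linarith
  have hyT : Tendsto (fun n => y (φ n) * (γ * T n)) atTop (𝓝 0) := by
    rw [tendsto_zero_iff_norm_tendsto_zero]
    have : Tendsto (fun n => 2 * ‖y (φ n) * (γ * P n)‖) atTop (𝓝 0) := by
      simpa using hyPn.const_mul 2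
    refine squeeze_zero' (Eventually.of_forall fun n => norm_nonneg _) ?_ this
    filter_upwards [hle] with n hn
    rw [norm_mul, hnT, norm_mul, hnP]
    have : ‖y (φ n)‖ * (γ * ‖T n‖) ≤ ‖y (φ n)‖ * (γ * (2 * ‖P n‖)) := by gcongr
    linarith
  have hys : Tendsto (fun n => y (φ n) * s (φ n)) atTop (𝓝 (-1)) := by
    have := hyT.const_add (-1)
    simp only [add_zero] at this
    refine this.congr fun n => ?_
    have h0 := ne_of_im (hy (φ n))
    rw [← hsub]
    unfold JJ
    field_simp
    ring
  have hform : ∀ n, γ * y (φ n) + JJ (T n) = y (φ n) * s (φ n) / T n := fun n =>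
    B_form (ne_of_im (hy _)) (ne_of_im (hT n)) (h _)
  constructor
  · have t1 := ((hyT.div hys (by norm_num)).const_mul (-(γ : ℂ)⁻¹))
    simp only [zero_div, mul_zero] at t1
    refine t1.congr fun n => ?_
    change _ = y (φ n) * JJ (γ * y (φ n) + JJ (T n))
    rw [hform]
    have h0 := ne_of_im (hy (φ n))
    have h3 := ne_of_im (hs (φ n))
    have h4 := ne_of_im (hT n)
    have h5 : (γ : ℂ) ≠ 0 := by exact_mod_cast hγ.ne'
    simp only [Pi.div_apply]
    unfold JJ
    field_simp
  · refine ⟨β * κ / 16, by positivity, ?_⟩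
    have e1 : Tendsto (fun n => ‖y (φ n) * s (φ n)‖) atTop (𝓝 1) := by simpa using hys.norm
    have e2 : Tendsto (fun n => (M * ‖y (φ n) * (γ * T n)‖) ^ 2) atTop (𝓝 0) := by
      simpa using (hyT.norm.const_mul M).pow 2
    filter_upwards [h2, e1.eventually (gt_mem_nhds (show (1 : ℝ) < 2 by norm_num)),
      e2.eventually (gt_mem_nhds (show (0 : ℝ) < 1 / 4 by norm_num))] with n hn1 hn2 hn3
    change _ ≤ (JJ (γ * y (φ n) + JJ (T n))).im
    have b1 := hT n
    have b2 := hP n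
    have hPκ : β * κ ≤ (P n).im :=
      (mul_le_mul_of_nonneg_left hn1 hβ.le).trans (FF_ge (c := c) G hα hβ (hx (φ n)) (hy (φ n)))
    have k1 := hpk n
    have a1 := hs (φ n)
    have a2 := JJ_pos (hy (φ n))
    have a3 := hpim n
    have a4 := hsim n
    have hD : DD (s (φ n)) (JJ (y (φ n))) ≤ 1 / 4 := by
      unfold DD
      rw [hsub, div_le_iff₀ (by positivity)]
      rw [norm_mul] at hn3
      set p := (JJ (y (φ n))).im
      set q := (s (φ n)).im
      have hqp : p ≤ q := by nlinarith
      set N := ‖(γ : ℂ) * T n‖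
      have hN : N ≤ M * (‖y (φ n)‖ * N) * p := by
        have : N ≤ N * (M * ‖y (φ n)‖ * p) := le_mul_of_one_le_right (norm_nonneg _) a3
        linarith
      calc N ^ 2 ≤ (M * (‖y (φ n)‖ * N) * p) ^ 2 := by gcongr
        _ = (M * (‖y (φ n)‖ * N)) ^ 2 * (p * p) := by ring
        _ ≤ 1 / 4 * (q * p) := by gcongr
    have hTP : (P n).im / 4 ≤ (T n).im := by
      by_contra hlt
      push Not at hlt
      unfold PK at k1
      have c1 : (P n).im - (T n).im ≤ ‖T n - P n‖ := by
        have := im_le_norm (-(T n - P n))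
        rw [norm_neg] at this
        simpa using this
      have c2 : ((P n).im - (T n).im) ^ 2 ≤ ‖T n - P n‖ ^ 2 := by
        have : 0 ≤ (P n).im - (T n).im := by linarith
        gcongr
      have c3 : DD (s (φ n)) (JJ (y (φ n))) * ((T n).im * (P n).im) ≤ 1 / 4 * ((T n).im * (P n).im) := by
        gcongr
      nlinarith
    have hTn := norm_pos_iff.mpr (ne_of_im b1)
    have hysn : 0 < ‖y (φ n) * s (φ n)‖ :=
      norm_pos_iff.mpr (mul_ne_zero (ne_of_im (hy _)) (ne_of_im a1))
    rw [JJ_im]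
    have d1 : (T n).im / ‖T n‖ ^ 2 ≤ (γ * y (φ n) + JJ (T n)).im := by
      rw [Complex.add_im, Complex.im_ofReal_mul, JJ_im]
      have := mul_pos hγ (hy (φ n))
      linarith
    have d2 : ‖γ * y (φ n) + JJ (T n)‖ = ‖y (φ n) * s (φ n)‖ / ‖T n‖ := by rw [hform, norm_div]
    rw [d2, le_div_iff₀ (by positivity)]
    refine le_trans ?_ d1
    rw [div_pow, mul_div_assoc', div_le_div_iff_of_pos_right (by positivity)]
    have : ‖y (φ n) * s (φ n)‖ ^ 2 ≤ 4 := by nlinarith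
    have hbk : 0 < β * κ := by positivity
    nlinarith

set_option maxHeartbeats 1000000 in
lemma step_good (G : Good A B) (hα : 0 ≤ α) (hβ : 0 < β) {γ : ℝ} (hγ : 0 < γ) {S : ℂ → ℂ → ℂ}
    (hS : ∀ X Y : ℂ, 0 < X.im → 0 < Y.im → 0 < (S X Y).im)
    (hE : ∀ X Y : ℂ, 0 < X.im → 0 < Y.im → S X Y = JJ Y + γ * FF α β c A B X (JJ (S X Y))) :
    Good (fun X Y => A (X + α * JJ (S X Y)) (c + β * JJ (S X Y)))
      (fun X Y => JJ (γ * Y + JJ (FF α β c A B X (JJ (S X Y))))) := by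
  have hv : ∀ X Y : ℂ, 0 < X.im → 0 < Y.im → 0 < (JJ (S X Y)).im := fun X Y hX hY =>
    JJ_pos (hS X Y hX hY)
  have hT : ∀ X Y : ℂ, 0 < X.im → 0 < Y.im → 0 < (FF α β c A B X (JJ (S X Y))).im :=
    fun X Y hX hY => FF_im G hα hβ hX (hv X Y hX hY)
  have hden : ∀ X Y : ℂ, 0 < X.im → 0 < Y.im →
      γ * Y.im ≤ (γ * Y + JJ (FF α β c A B X (JJ (S X Y)))).im := by
    intro X Y hX hY
    rw [Complex.add_im, Complex.im_ofReal_mul]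
    linarith [JJ_pos (hT X Y hX hY)]
  have hden' : ∀ X Y : ℂ, 0 < X.im → 0 < Y.im →
      0 < (γ * Y + JJ (FF α β c A B X (JJ (S X Y)))).im := fun X Y hX hY =>
    (mul_pos hγ hY).trans_le (hden X Y hX hY)
  have hSpk : ∀ (k : ℝ) (x y x' y' : ℂ), 0 ≤ k → 0 < x.im → 0 < y.im → 0 < x'.im → 0 < y'.im →
      PK k x x' → PK k y y' → PK k (JJ (S x y)) (JJ (S x' y')) := by
    intro k x y x' y' hk hx hy hx' hy' h1 h2
    exact (S_pk G hα hβ hγ hx hy hx' hy' (hS _ _ hx hy) (hS _ _ hx' hy') (hE _ _ hx hy)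
      (hE _ _ hx' hy') hk h1 h2).inv (hS _ _ hx hy) (hS _ _ hx' hy')
  refine ⟨?_, ?_, ?_, ?_, ?_, ?_, ?_, ?_⟩
  · intro x y hx hy
    exact G.imA _ _ (arg1_im hα hx (hv _ _ hx hy).le) (arg2_im hβ (hv _ _ hx hy))
  · intro x y hx hy
    exact JJ_pos (hden' x y hx hy)
  · intro x y hx hy
    refine (G.bA _ _ (arg1_im hα hx (hv _ _ hx hy).le) (arg2_im hβ (hv _ _ hx hy))).trans ?_
    apply one_div_le_one_div_of_le hx
    have := mul_nonneg hα (hv _ _ hx hy).le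
    simp only [Complex.add_im, Complex.im_ofReal_mul]
    linarith
  · refine ⟨1 / γ, by positivity, fun x y hx hy => ?_⟩
    refine (JJ_norm_le (by positivity) (hden x y hx hy)).trans ?_
    rw [div_div]
  · intro k x y x' y' hk hx hy hx' hy' h1 h2
    have h3 := hSpk k x y x' y' hk hx hy hx' hy' h1 h2
    have a1 := hv _ _ hx hy
    have a2 := hv _ _ hx' hy'
    refine G.pA _ _ _ _ _ hk (arg1_im hα hx a1.le) (arg2_im hβ a1)
      (arg1_im hα hx' a2.le) (arg2_im hβ a2) ?_ ((h3.smul β).shift c)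
    exact PK.add hk hx.le hx'.le (by rw [Complex.im_ofReal_mul]; positivity)
      (by rw [Complex.im_ofReal_mul]; positivity) h1 (h3.smul α)
  · intro k x y x' y' hk hx hy hx' hy' h1 h2
    have h3 := hSpk k x y x' y' hk hx hy hx' hy' h1 h2
    refine PK.inv (hden' _ _ hx hy) (hden' _ _ hx' hy') ?_
    refine PK.add hk (by rw [Complex.im_ofReal_mul]; positivity)
      (by rw [Complex.im_ofReal_mul]; positivity) (JJ_pos (hT _ _ hx hy)).le
      (JJ_pos (hT _ _ hx' hy')).le (h2.smul γ) ?_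
    exact (FF_pk G hα hβ hk hx (hv _ _ hx hy) hx' (hv _ _ hx' hy') h1 h3).inv (hT _ _ hx hy)
      (hT _ _ hx' hy')
  · intro k x y x' y' hk hx hy hx' hy' h1 h2
    have h3 := hSpk k x y x' y' hk.le hx hy hx' hy' h1.pk h2
    refine PS.inv (hden' _ _ hx hy) (hden' _ _ hx' hy') ?_
    rw [add_comm, add_comm ((γ : ℂ) * y')]
    refine PS.add hk.le (JJ_pos (hT _ _ hx hy)).le
      (JJ_pos (hT _ _ hx' hy')).le (by rw [Complex.im_ofReal_mul]; positivity)
      (by rw [Complex.im_ofReal_mul]; positivity) ?_ (h2.smul γ)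
    exact (FF_ps G hα hβ hk hx (hv _ _ hx hy) hx' (hv _ _ hx' hy') h1 h3).inv (hT _ _ hx hy)
      (hT _ _ hx' hy')
  · intro x y X c' M hX hx hy tx ty hM
    by_cases hc : c' = 0
    · subst hc
      simp only [Complex.ofReal_zero, sub_zero] at ty hM ⊢
      exact nt_zero (c := c) (s := fun n => S (x n) (y n)) G hα hβ hγ hX hx hy
        (fun n => hS _ _ (hx n) (hy n)) (fun n => hE _ _ (hx n) (hy n)) tx ty hM
    · have hcc : (c' : ℂ) ≠ 0 := by exact_mod_cast hc
      have tJ := JJ_tendsto ty hcc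
      obtain ⟨φ, p, hφ, tp, hp, hfix⟩ := exclude (c := c) G hα hβ hγ hX
        (w := JJ c') (by rw [JJ_im]; simp) (by simpa [JJ] using hc)
        (f := fun n a => JJ (y n) + γ * FF α β c A B (x n) (JJ a)) (s := fun n => S (x n) (y n))
        (fun n => hS _ _ (hx n) (hy n))
        (fun n a ha => map_julia G hα hβ hγ (hx n) (JJ_pos (hy n)).le ha (hS _ _ (hx n) (hy n))
          (hE _ _ (hx n) (hy n)))
        (fun a ha => tJ.add ((FF_cont G hα hβ hX (JJ_pos ha) hx (fun n => JJ_pos ha) tx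
          tendsto_const_nhds).const_mul _))
      have tT := FF_cont (c := c) G hα hβ hX (JJ_pos hp) (fun n => hx (φ n))
        (fun n => hv _ _ (hx (φ n)) (hy (φ n))) (tx.comp hφ.tendsto_atTop)
        (JJ_tendsto tp (ne_of_im hp))
      have hT' := FF_im (c := c) G hα hβ hX (JJ_pos hp)
      have ty' := ty.comp hφ.tendsto_atTop
      have hpos : 0 < (γ * (c' : ℂ) + JJ (FF α β c A B X (JJ p))).im := by
        rw [Complex.add_im, Complex.im_ofReal_mul, Complex.ofReal_im, mul_zero, zero_add]
        exact JJ_pos hT'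
      have tB := JJ_tendsto ((ty'.const_mul (γ : ℂ)).add (JJ_tendsto tT (ne_of_im hT')))
        (ne_of_im hpos)
      refine ⟨φ, hφ, ?_, _, half_pos (JJ_pos hpos), ?_⟩
      · have := (ty'.sub_const (c' : ℂ)).mul tB
        simp only [sub_self, zero_mul] at this
        exact this
      · have := ((Complex.continuous_im.tendsto _).comp tB).eventually
          (lt_mem_nhds (half_lt_self (JJ_pos hpos)))
        filter_upwards [this] with n hn
        exact hn.le

end step2

section base

lemma pick_pt {k r t p q n : ℝ} (ht : 0 < t) (hp : 0 ≤ p) (hq : 0 ≤ q) (hr : 0 ≤ r)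
    (hrk : r ^ 2 = k) (h : n ^ 2 ≤ k * (p * q)) : n ≤ r / 2 * (t * p + t⁻¹ * q) := by
  apply le_of_pow_le_pow_left₀ two_ne_zero (by positivity)
  refine h.trans ?_
  have : t * t⁻¹ = 1 := mul_inv_cancel₀ ht.ne'
  have e : (r / 2 * (t * p + t⁻¹ * q)) ^ 2 - k * (p * q) = (r / 2 * (t * p - t⁻¹ * q)) ^ 2 := by
    rw [← hrk]
    linear_combination (r ^ 2 * p * q) * this
  nlinarith [sq_nonneg (r / 2 * (t * p - t⁻¹ * q))]

lemma pick_pt' {k r t p q n : ℝ} (ht : 0 < t) (hp : 0 ≤ p) (hq : 0 ≤ q) (hr : 0 ≤ r)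
    (hrk : r ^ 2 = k) (h : n ^ 2 < k * (p * q)) : n < r / 2 * (t * p + t⁻¹ * q) := by
  apply lt_of_pow_lt_pow_left₀ 2 (by positivity)
  refine h.trans_le ?_
  have : t * t⁻¹ = 1 := mul_inv_cancel₀ ht.ne'
  have e : (r / 2 * (t * p + t⁻¹ * q)) ^ 2 - k * (p * q) = (r / 2 * (t * p - t⁻¹ * q)) ^ 2 := by
    rw [← hrk]
    linear_combination (r ^ 2 * p * q) * this
  nlinarith [sq_nonneg (r / 2 * (t * p - t⁻¹ * q))]

lemma pick_val {k r P Q : ℝ} (hP : 0 < P) (hQ : 0 < Q) (hrk : r ^ 2 = k) :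
    (r / 2 * (√(Q / P) * P + (√(Q / P))⁻¹ * Q)) ^ 2 = k * (P * Q) := by
  have ht : 0 < √(Q / P) := Real.sqrt_pos.mpr (by positivity)
  have h1 : √(Q / P) ^ 2 = Q / P := Real.sq_sqrt (by positivity)
  set t := √(Q / P)
  have h2 : t ^ 2 * P = Q := by rw [h1]; field_simp
  rw [← h2, ← hrk]
  field_simp
  ring

variable {μ : Measure ℝ} {f g : ℝ → ℂ} {k : ℝ}

lemma int_im (hf : Integrable f μ) : (∫ x, f x ∂μ).im = ∫ x, (f x).im ∂μ := by
  have := integral_im (𝕜 := ℂ) hf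
  simpa using this.symm

lemma im_int (hf : Integrable f μ) : Integrable (fun x => (f x).im) μ := hf.im

lemma int_PK (hf : Integrable f μ) (hg : Integrable g μ) (hk : 0 ≤ k)
    (h : ∀ᵐ x ∂μ, 0 ≤ (f x).im ∧ 0 ≤ (g x).im ∧ PK k (f x) (g x))
    (hP : 0 < (∫ x, f x ∂μ).im) (hQ : 0 < (∫ x, g x ∂μ).im) :
    PK k (∫ x, f x ∂μ) (∫ x, g x ∂μ) := by
  have hr : √k ^ 2 = k := Real.sq_sqrt hk
  have ht : 0 < √((∫ x, g x ∂μ).im / (∫ x, f x ∂μ).im) := Real.sqrt_pos.mpr (by positivity)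
  unfold PK
  rw [← pick_val hP hQ hr, ← integral_sub hf hg]
  set t := √((∫ x, g x ∂μ).im / (∫ x, f x ∂μ).im)
  have e : √k / 2 * (t * (∫ x, f x ∂μ).im + t⁻¹ * (∫ x, g x ∂μ).im) =
      ∫ x, √k / 2 * (t * (f x).im + t⁻¹ * (g x).im) ∂μ := by
    rw [integral_const_mul, integral_add ((im_int hf).const_mul _) ((im_int hg).const_mul _),
      integral_const_mul, integral_const_mul, int_im hf, int_im hg]
  rw [e]
  gcongr
  refine (norm_integral_le_integral_norm _).trans ?_
  refine integral_mono_ae (hf.sub hg).norm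
    ((((im_int hf).const_mul _).add ((im_int hg).const_mul _)).const_mul _) ?_
  filter_upwards [h] with x hx
  exact pick_pt ht hx.1 hx.2.1 (Real.sqrt_nonneg _) hr hx.2.2

lemma int_lt {u v : ℝ → ℝ} (hu : Integrable u μ) (hv : Integrable v μ) (h : ∀ᵐ x ∂μ, u x ≤ v x)
    (hs : μ {x | u x < v x} ≠ 0) : ∫ x, u x ∂μ < ∫ x, v x ∂μ := by
  rw [← sub_pos, ← integral_sub hv hu, integral_pos_iff_support_of_nonneg_ae
    (h.mono fun x hx => sub_nonneg.mpr hx) (hv.sub hu), pos_iff_ne_zero]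
  refine fun h0 => hs (measure_mono_null ?_ h0)
  intro x hx
  simp only [Function.mem_support]
  exact (sub_pos.mpr hx).ne'

lemma int_PS (hf : Integrable f μ) (hg : Integrable g μ) (hk : 0 ≤ k)
    (h : ∀ᵐ x ∂μ, 0 ≤ (f x).im ∧ 0 ≤ (g x).im ∧ PK k (f x) (g x))
    (hs : μ {x | 0 ≤ (f x).im ∧ 0 ≤ (g x).im ∧ PS k (f x) (g x)} ≠ 0)
    (hP : 0 < (∫ x, f x ∂μ).im) (hQ : 0 < (∫ x, g x ∂μ).im) :
    PS k (∫ x, f x ∂μ) (∫ x, g x ∂μ) := by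
  have hr : √k ^ 2 = k := Real.sq_sqrt hk
  have ht : 0 < √((∫ x, g x ∂μ).im / (∫ x, f x ∂μ).im) := Real.sqrt_pos.mpr (by positivity)
  unfold PS
  rw [← pick_val hP hQ hr, ← integral_sub hf hg]
  set t := √((∫ x, g x ∂μ).im / (∫ x, f x ∂μ).im)
  have e : √k / 2 * (t * (∫ x, f x ∂μ).im + t⁻¹ * (∫ x, g x ∂μ).im) =
      ∫ x, √k / 2 * (t * (f x).im + t⁻¹ * (g x).im) ∂μ := by
    rw [integral_const_mul, integral_add ((im_int hf).const_mul _) ((im_int hg).const_mul _),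
      integral_const_mul, integral_const_mul, int_im hf, int_im hg]
  rw [e]
  refine pow_lt_pow_left₀ ?_ (norm_nonneg _) two_ne_zero
  refine (norm_integral_le_integral_norm _).trans_lt ?_
  refine int_lt (hf.sub hg).norm
    ((((im_int hf).const_mul _).add ((im_int hg).const_mul _)).const_mul _) ?_ ?_
  · filter_upwards [h] with x hx
    exact pick_pt ht hx.1 hx.2.1 (Real.sqrt_nonneg _) hr hx.2.2
  · refine fun h0 => hs (measure_mono_null ?_ h0)
    intro x hx
    exact pick_pt' ht hx.1 hx.2.1 (Real.sqrt_nonneg _) hr hx.2.2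

end base

section base2
variable {μ : Measure ℝ} [IsProbabilityMeasure μ]

noncomputable def A0 (μ : Measure ℝ) (X Y : ℂ) : ℂ := ∫ x : ℝ, JJ (X + (x : ℂ) * Y) ∂μ
noncomputable def B0 (μ : Measure ℝ) (X Y : ℂ) : ℂ := ∫ x : ℝ, (x : ℂ) * JJ (X + (x : ℂ) * Y) ∂μ

lemma d_im {X Y : ℂ} {x : ℝ} : (X + (x : ℂ) * Y).im = X.im + x * Y.im := by
  simp

lemma d_pos {X Y : ℂ} {x : ℝ} (hX : 0 < X.im) (hY : 0 < Y.im) (hx : 0 ≤ x) :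
    0 < (X + (x : ℂ) * Y).im := by
  rw [d_im]; positivity

lemma meas_A {X Y : ℂ} : Measurable fun x : ℝ => JJ (X + (x : ℂ) * Y) := by
  unfold JJ; fun_prop

lemma meas_B {X Y : ℂ} : Measurable fun x : ℝ => (x : ℂ) * JJ (X + (x : ℂ) * Y) := by
  unfold JJ; fun_prop

lemma bd_A {X Y : ℂ} {x : ℝ} (hX : 0 < X.im) (hY : 0 < Y.im) (hx : 0 ≤ x) :
    ‖JJ (X + (x : ℂ) * Y)‖ ≤ 1 / X.im := by
  apply JJ_norm_le hX
  rw [d_im]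
  nlinarith

lemma bd_B {X Y : ℂ} {x : ℝ} (hX : 0 < X.im) (hY : 0 < Y.im) (hx : 0 ≤ x) :
    ‖(x : ℂ) * JJ (X + (x : ℂ) * Y)‖ ≤ 1 / Y.im := by
  rw [norm_mul, Complex.norm_real, Real.norm_of_nonneg hx]
  rcases hx.eq_or_lt with rfl | h
  · simp; positivity
  · have := JJ_norm_le (s := X + (x : ℂ) * Y) (d := x * Y.im) (by positivity) (by rw [d_im]; linarith)
    calc _ ≤ x * (1 / (x * Y.im)) := by gcongr
      _ = _ := by field_simp

lemma ae_nn (hμ : μ (Set.Iio 0) = 0) : ∀ᵐ x ∂μ, 0 ≤ x := by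
  rw [ae_iff]
  convert hμ using 2
  ext x; simp

lemma pos_meas (hμ : μ (Set.Iio 0) = 0) (hne : μ ≠ Measure.dirac 0) : μ (Set.Ioi 0) ≠ 0 := by
  intro h
  apply hne
  have : μ {0}ᶜ = 0 := by
    rw [← Set.Iio_union_Ioi]
    exact measure_union_null hμ h
  have h1 : ∀ᵐ x ∂μ, x = 0 := by
    rw [ae_iff]; exact this
  have h3 := (Measure.map_congr (mβ := Real.measurableSpace) (f := id) (g := fun _ => (0 : ℝ)) h1)
  rw [Measure.map_id, Measure.map_const] at h3
  simpa using h3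

lemma int_A (hμ : μ (Set.Iio 0) = 0) {X Y : ℂ} (hX : 0 < X.im) (hY : 0 < Y.im) :
    Integrable (fun x : ℝ => JJ (X + (x : ℂ) * Y)) μ :=
  Integrable.of_bound meas_A.aestronglyMeasurable (1 / X.im)
    ((ae_nn hμ).mono fun _ hx => bd_A hX hY hx)

lemma int_B (hμ : μ (Set.Iio 0) = 0) {X Y : ℂ} (hX : 0 < X.im) (hY : 0 < Y.im) :
    Integrable (fun x : ℝ => (x : ℂ) * JJ (X + (x : ℂ) * Y)) μ :=
  Integrable.of_bound meas_B.aestronglyMeasurable (1 / Y.im)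
    ((ae_nn hμ).mono fun _ hx => bd_B hX hY hx)

lemma A0_im (hμ : μ (Set.Iio 0) = 0) {X Y : ℂ} (hX : 0 < X.im) (hY : 0 < Y.im) :
    0 < (A0 μ X Y).im := by
  unfold A0
  rw [int_im (int_A hμ hX hY), integral_pos_iff_support_of_nonneg_ae
    ((ae_nn hμ).mono fun x hx => (JJ_pos (d_pos hX hY hx)).le) (im_int (int_A hμ hX hY))]
  rw [pos_iff_ne_zero]
  intro h0
  have : ∀ᵐ x ∂μ, False := by
    have h1 : ∀ᵐ x ∂μ, x ∉ Function.support (fun x : ℝ => (JJ (X + (x : ℂ) * Y)).im) := by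
      exact measure_eq_zero_iff_ae_notMem.mp h0
    filter_upwards [h1, ae_nn hμ] with x h1 h2
    exact h1 (JJ_pos (d_pos hX hY h2)).ne'
  simp at this
  exact IsProbabilityMeasure.ne_zero μ this

lemma B0_im (hμ : μ (Set.Iio 0) = 0) (hp : μ (Set.Ioi 0) ≠ 0) {X Y : ℂ} (hX : 0 < X.im)
    (hY : 0 < Y.im) : 0 < (B0 μ X Y).im := by
  unfold B0
  rw [int_im (int_B hμ hX hY), integral_pos_iff_support_of_nonneg_ae
    ((ae_nn hμ).mono fun x hx => ?_) (im_int (int_B hμ hX hY))]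
  · rw [pos_iff_ne_zero]
    refine fun h0 => hp (measure_mono_null ?_ h0)
    intro x hx
    simp only [Set.mem_Ioi] at hx
    simp only [Function.mem_support, Complex.im_ofReal_mul]
    exact (mul_pos hx (JJ_pos (d_pos hX hY hx.le))).ne'
  · simp only [Complex.im_ofReal_mul, Pi.zero_apply]
    exact mul_nonneg hx (JJ_pos (d_pos hX hY hx)).le

lemma d_PK {k : ℝ} {X Y X' Y' : ℂ} {x : ℝ} (hk : 0 ≤ k) (hX : 0 < X.im) (hY : 0 < Y.im)
    (hX' : 0 < X'.im) (hY' : 0 < Y'.im) (hx : 0 ≤ x) (h1 : PK k X X') (h2 : PK k Y Y') :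
    PK k (JJ (X + (x : ℂ) * Y)) (JJ (X' + (x : ℂ) * Y')) := by
  refine PK.inv (d_pos hX hY hx) (d_pos hX' hY' hx) ?_
  exact PK.add hk hX.le hX'.le (by rw [Complex.im_ofReal_mul]; positivity)
    (by rw [Complex.im_ofReal_mul]; positivity) h1 (h2.smul x)

lemma d_PS {k : ℝ} {X Y X' Y' : ℂ} {x : ℝ} (hk : 0 ≤ k) (hX : 0 < X.im) (hY : 0 < Y.im)
    (hX' : 0 < X'.im) (hY' : 0 < Y'.im) (hx : 0 ≤ x) (h1 : PS k X X') (h2 : PK k Y Y') :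
    PS k (JJ (X + (x : ℂ) * Y)) (JJ (X' + (x : ℂ) * Y')) := by
  refine PS.inv (d_pos hX hY hx) (d_pos hX' hY' hx) ?_
  exact PS.add hk hX.le hX'.le (by rw [Complex.im_ofReal_mul]; positivity)
    (by rw [Complex.im_ofReal_mul]; positivity) h1 (h2.smul x)

lemma xJ_im {X Y : ℂ} {x : ℝ} (hX : 0 < X.im) (hY : 0 < Y.im) (hx : 0 ≤ x) :
    0 ≤ ((x : ℂ) * JJ (X + (x : ℂ) * Y)).im := by
  rw [Complex.im_ofReal_mul]
  exact mul_nonneg hx (JJ_pos (d_pos hX hY hx)).le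

lemma nt_base (hμ : μ (Set.Iio 0) = 0) (hp : μ (Set.Ioi 0) ≠ 0)
    (x y : ℕ → ℂ) (X : ℂ) (c M : ℝ) (hX : 0 < X.im) (hx : ∀ n, 0 < (x n).im)
    (hy : ∀ n, 0 < (y n).im) (tx : Tendsto x atTop (𝓝 X)) (ty : Tendsto y atTop (𝓝 (c : ℂ)))
    (hM : ∀ n, ‖y n - c‖ ≤ M * (y n).im) :
    Tendsto (fun n => (y n - c) * B0 μ (x n) (y n)) atTop (𝓝 0) ∧
      ∃ κ : ℝ, 0 < κ ∧ ∀ᶠ n in atTop, κ ≤ (B0 μ (x n) (y n)).im := by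
  constructor
  · have hM0 : 0 ≤ M := by
      by_contra hlt
      push Not at hlt
      have := hM 0
      nlinarith [norm_nonneg (y 0 - c), hy 0]
    have key : Tendsto (fun n => ∫ r : ℝ, (y n - c) * ((r : ℂ) * JJ (x n + (r : ℂ) * y n)) ∂μ) atTop
        (𝓝 (∫ r : ℝ, (0 : ℂ) ∂μ)) := by
      refine tendsto_integral_of_dominated_convergence (fun _ => M)
        (fun n => (meas_B.const_mul _).aestronglyMeasurable) (integrable_const _) ?_ ?_
      · intro n
        filter_upwards [ae_nn hμ] with r hr
        rw [norm_mul]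
        calc _ ≤ (M * (y n).im) * (1 / (y n).im) :=
              mul_le_mul (hM n) (bd_B (hx n) (hy n) hr) (norm_nonneg _)
                (mul_nonneg hM0 (hy n).le)
          _ = M := by have := (hy n).ne'; field_simp
      · filter_upwards [ae_nn hμ] with r hr
        have h0 : X + (r : ℂ) * c ≠ 0 := by
          apply ne_of_im
          simpa using hX
        have := (ty.sub_const (c : ℂ)).mul
          ((JJ_tendsto (tx.add (ty.const_mul (r : ℂ))) h0).const_mul (r : ℂ))
        simpa using this
    simp only [integral_zero, integral_const_mul] at key
    exact key
  · set R : ℝ := ‖X‖ + |c| + 2 with hR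
    have hR0 : 0 < R := by positivity
    let h : ℝ → ℝ := fun r => r * ((X.im / 2) / (R * (1 + r)) ^ 2)
    have hbd : ∀ r : ℝ, 0 ≤ r → 0 ≤ h r ∧ h r ≤ (X.im / 2) / R ^ 2 := by
      intro r hr
      refine ⟨by simp only [h]; positivity, ?_⟩
      simp only [h]
      rw [mul_div_assoc', div_le_div_iff₀ (by positivity) (by positivity)]
      have : 0 ≤ X.im / 2 * R ^ 2 * (1 + r + r ^ 2) := by positivity
      nlinarith
    have hmeas : Measurable h := by simp only [h]; fun_prop
    have hint : Integrable h μ := by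
      refine Integrable.of_bound hmeas.aestronglyMeasurable ((X.im / 2) / R ^ 2) ?_
      filter_upwards [ae_nn hμ] with r hr
      rw [Real.norm_of_nonneg (hbd r hr).1]
      exact (hbd r hr).2
    refine ⟨∫ r, h r ∂μ, ?_, ?_⟩
    · rw [integral_pos_iff_support_of_nonneg_ae ((ae_nn hμ).mono fun r hr => (hbd r hr).1) hint,
        pos_iff_ne_zero]
      refine fun h0 => hp (measure_mono_null ?_ h0)
      intro r hr
      simp only [Set.mem_Ioi] at hr
      simp only [Function.mem_support, h]
      positivity
    · have t1 := ((Complex.continuous_im.tendsto _).comp tx).eventually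
        (lt_mem_nhds (half_lt_self hX))
      have t2 := tx.norm.eventually (gt_mem_nhds (lt_add_one ‖X‖))
      have t3 := ty.norm.eventually (gt_mem_nhds (lt_add_one ‖(c : ℂ)‖))
      filter_upwards [t1, t2, t3] with n h1 h2 h3
      unfold B0
      rw [int_im (int_B hμ (hx n) (hy n))]
      refine integral_mono_ae hint (im_int (int_B hμ (hx n) (hy n))) ?_
      filter_upwards [ae_nn hμ] with r hr
      rw [Complex.im_ofReal_mul, JJ_im]
      simp only [h]
      have hd := norm_pos_iff.mpr (ne_of_im (d_pos (hx n) (hy n) hr))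
      have h4 : ‖x n + (r : ℂ) * y n‖ ≤ R * (1 + r) := by
        refine (norm_add_le _ _).trans ?_
        rw [norm_mul, Complex.norm_real, Real.norm_of_nonneg hr]
        rw [Complex.norm_real, Real.norm_eq_abs] at h3
        have : r * ‖y n‖ ≤ r * R := by
          have := norm_nonneg X
          gcongr; linarith
        have : ‖x n‖ ≤ R := by
          have := abs_nonneg c
          linarith
        linarith
      have h5 : X.im / 2 ≤ (x n + (r : ℂ) * y n).im := by
        rw [d_im]
        have : X.im / 2 < (x n).im := h1
        have := mul_nonneg hr (hy n).le
        linarith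
      have h6 : 0 ≤ (x n + (r : ℂ) * y n).im := by linarith
      gcongr

lemma base_good (hμ : μ (Set.Iio 0) = 0) (hp : μ (Set.Ioi 0) ≠ 0) : Good (A0 μ) (B0 μ) := by
  refine ⟨fun X Y => A0_im hμ, fun X Y => B0_im hμ hp, ?_, ⟨1, one_pos, ?_⟩, ?_, ?_, ?_, ?_⟩
  · intro X Y hX hY
    have := norm_integral_le_of_norm_le_const (μ := μ) (f := fun x : ℝ => JJ (X + (x : ℂ) * Y))
      (C := 1 / X.im) ((ae_nn hμ).mono fun _ hx => bd_A hX hY hx)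
    simpa [A0] using this
  · intro X Y hX hY
    have := norm_integral_le_of_norm_le_const (μ := μ)
      (f := fun x : ℝ => (x : ℂ) * JJ (X + (x : ℂ) * Y))
      (C := 1 / Y.im) ((ae_nn hμ).mono fun _ hx => bd_B hX hY hx)
    simpa [B0] using this
  · intro k X Y X' Y' hk hX hY hX' hY' h1 h2
    refine int_PK (int_A hμ hX hY) (int_A hμ hX' hY') hk ?_ (A0_im hμ hX hY) (A0_im hμ hX' hY')
    filter_upwards [ae_nn hμ] with x hx
    exact ⟨(JJ_pos (d_pos hX hY hx)).le, (JJ_pos (d_pos hX' hY' hx)).le,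
      d_PK hk hX hY hX' hY' hx h1 h2⟩
  · intro k X Y X' Y' hk hX hY hX' hY' h1 h2
    refine int_PK (int_B hμ hX hY) (int_B hμ hX' hY') hk ?_ (B0_im hμ hp hX hY)
      (B0_im hμ hp hX' hY')
    filter_upwards [ae_nn hμ] with x hx
    exact ⟨xJ_im hX hY hx, xJ_im hX' hY' hx, (d_PK hk hX hY hX' hY' hx h1 h2).smul x⟩
  · intro k X Y X' Y' hk hX hY hX' hY' h1 h2
    refine int_PS (int_B hμ hX hY) (int_B hμ hX' hY') hk.le ?_ ?_ (B0_im hμ hp hX hY)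
      (B0_im hμ hp hX' hY')
    · filter_upwards [ae_nn hμ] with x hx
      exact ⟨xJ_im hX hY hx, xJ_im hX' hY' hx, (d_PK hk.le hX hY hX' hY' hx h1.pk h2).smul x⟩
    · refine fun h0 => hp (measure_mono_null ?_ h0)
      intro x hx
      simp only [Set.mem_Ioi] at hx
      exact ⟨xJ_im hX hY hx.le, xJ_im hX' hY' hx.le,
        (d_PS hk.le hX hY hX' hY' hx.le h1 h2).smul hx⟩
  · intro x y X c M hX hx hy tx ty hM
    exact ⟨id, strictMono_id, nt_base hμ hp x y X c M hX hx hy tx ty hM⟩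

end base2

section assembly

open Classical in
noncomputable def solv (F : ℂ → ℂ) : ℂ :=
  if h : ∃ s : ℂ, 0 < s.im ∧ s = F s then Classical.choose h else 0

lemma solv_spec {F : ℂ → ℂ} (h : ∃ s : ℂ, 0 < s.im ∧ s = F s) :
    0 < (solv F).im ∧ solv F = F (solv F) := by
  have := Classical.choose_spec h
  unfold solv
  rw [dif_pos h]
  exact this

noncomputable def tt (b : ℝ) (γ : ℕ → ℝ) (μ : Measure ℝ) :
    (ℓ : ℕ) → (Fin (ℓ + 2) → ℂ) → (Fin (ℓ + 2) → ℂ) → ℂ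
  | 0 => fun zv wv => ∫ x : ℝ, (wv 0 + wv 1 * (x : ℂ)) / (zv 0 + zv 1 * (x : ℂ)) ∂μ
  | (ℓ + 1) => fun zv wv => wv (Fin.last (ℓ + 2)) / zv (Fin.last (ℓ + 2)) +
      tt b γ μ ℓ (zprevVec b (solv fun s => (zv (Fin.last (ℓ + 2)))⁻¹ +
            (γ (ℓ + 1) : ℂ) * tt b γ μ ℓ (zprevVec b s zv) (eVec b ℓ)) zv) (wprevVec zv wv)

noncomputable def ss (b : ℝ) (γ : ℕ → ℝ) (μ : Measure ℝ) :
    (ℓ : ℕ) → (Fin (ℓ + 2) → ℂ) → ℂ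
  | 0 => fun _ => 0
  | (ℓ + 1) => fun zv => solv fun s => (zv (Fin.last (ℓ + 2)))⁻¹ +
            (γ (ℓ + 1) : ℂ) * tt b γ μ ℓ (zprevVec b s zv) (eVec b ℓ)

noncomputable def zmk {n : ℕ} (zv : Fin (n + 2) → ℂ) (X Y : ℂ) : Fin (n + 2) → ℂ :=
  fun i => if i = 0 then -X else if i = Fin.last (n + 1) then -Y else zv i

def Repr3 {n : ℕ} (T : (Fin (n + 2) → ℂ) → (Fin (n + 2) → ℂ) → ℂ) (zv : Fin (n + 2) → ℂ)
    (A B : ℂ → ℂ → ℂ) : Prop :=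
  ∀ X Y : ℂ, 0 < X.im → 0 < Y.im → ∃ m : Fin (n + 2) → ℂ, m 0 = A X Y ∧
    m (Fin.last (n + 1)) = B X Y ∧ ∑ i, m i * zmk zv X Y i = 1 ∧
    ∀ w, T (zmk zv X Y) w = ∑ i, m i * w i

lemma last_ne {n : ℕ} : (0 : Fin (n + 2)) ≠ Fin.last (n + 1) := (Fin.last_pos).ne

lemma zprev_eq {n : ℕ} {b : ℝ} {zz : Fin (n + 3) → ℂ} {zv : Fin (n + 2) → ℂ} {X s : ℂ} {c : ℝ}
    (h0 : zz 0 = -X) (hl : zz (Fin.last (n + 1)).castSucc = -(c : ℂ))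
    (hm : ∀ i, i ≠ 0 → i ≠ Fin.last (n + 1) → zz i.castSucc = zv i) :
    zprevVec b s zz = zmk zv (X + ((1 - b ^ 2 : ℝ) : ℂ) * JJ s)
      ((c : ℂ) + ((b ^ 2 : ℝ) : ℂ) * JJ s) := by
  ext i
  unfold zprevVec zmk
  by_cases hi : i = 0
  · subst hi
    simp [last_ne, h0, JJ]
    ring
  · by_cases hi' : i = Fin.last (n + 1)
    · subst hi'
      simp [last_ne.symm, hl, JJ]
      ring
    · simp [hi, hi', hm i hi hi']

lemma zprev_add {n : ℕ} {b : ℝ} {zz : Fin (n + 3) → ℂ} {s : ℂ} (i : Fin (n + 2)) :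
    zprevVec b s zz i = zz i.castSucc + eVec b n i / s := by
  unfold zprevVec eVec
  by_cases hi : i = 0
  · subst hi
    simp [last_ne]
  · by_cases hi' : i = Fin.last (n + 1)
    · subst hi'
      simp [last_ne.symm]
    · simp [hi, hi']

lemma sum_eVec {n : ℕ} {b : ℝ} (m : Fin (n + 2) → ℂ) :
    ∑ i, m i * eVec b n i = ((1 - b ^ 2 : ℝ) : ℂ) * m 0 + ((b ^ 2 : ℝ) : ℂ) * m (Fin.last (n + 1)) := by
  rw [Fintype.sum_eq_add 0 (Fin.last (n + 1)) last_ne]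
  · simp [eVec, last_ne.symm]
    ring
  · rintro i ⟨h1, h2⟩
    simp [eVec, h1, h2]

lemma T_eq {n : ℕ} {b : ℝ} (hb : b ≠ 0) (hb1 : 0 ≤ 1 - b ^ 2)
    {T : (Fin (n + 2) → ℂ) → (Fin (n + 2) → ℂ) → ℂ}
    {zz : Fin (n + 3) → ℂ} {zv : Fin (n + 2) → ℂ} {X s : ℂ} {c : ℝ} {A B : ℂ → ℂ → ℂ}
    (hR : Repr3 T zv A B)
    (h0 : zz 0 = -X) (hl : zz (Fin.last (n + 1)).castSucc = -(c : ℂ))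
    (hm : ∀ i, i ≠ 0 → i ≠ Fin.last (n + 1) → zz i.castSucc = zv i)
    (hX : 0 < X.im) (hs : 0 < s.im) :
    T (zprevVec b s zz) (eVec b n) = FF (1 - b ^ 2) (b ^ 2) c A B X (JJ s) := by
  obtain ⟨m, m0, ml, -, mw⟩ := hR _ _ (arg1_im hb1 hX (JJ_pos hs).le)
    (arg2_im (c := c) (by positivity : 0 < b ^ 2) (JJ_pos hs))
  rw [zprev_eq h0 hl hm, mw, sum_eVec, m0, ml, FF]

lemma rep_base {b : ℝ} {γ : ℕ → ℝ} {μ : Measure ℝ} [IsProbabilityMeasure μ]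
    (hμ : μ (Set.Iio 0) = 0) (zv : Fin 2 → ℂ) :
    Repr3 (n := 0) (tt b γ μ 0) zv (A0 μ) (B0 μ) := by
  intro X Y hX hY
  have hz0 : zmk (n := 0) zv X Y 0 = -X := by simp [zmk]
  have hz1 : zmk (n := 0) zv X Y 1 = -Y := by simp [zmk]
  have key : ∀ w0 w1 : ℂ, ∫ x : ℝ, (w0 + w1 * (x : ℂ)) / (-X + -Y * (x : ℂ)) ∂μ =
      A0 μ X Y * w0 + B0 μ X Y * w1 := by
    intro w0 w1
    unfold A0 B0
    rw [← integral_mul_const, ← integral_mul_const, ← integral_add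
      ((int_A hμ hX hY).mul_const _) ((int_B hμ hX hY).mul_const _)]
    congr 1
    ext x
    have : -X + -Y * (x : ℂ) = -(X + (x : ℂ) * Y) := by ring
    rw [this, JJ, div_neg, div_eq_mul_inv]
    ring
  refine ⟨![A0 μ X Y, B0 μ X Y], rfl, rfl, ?_, ?_⟩
  · rw [Fin.sum_univ_two, hz0, hz1]
    simp only [Matrix.cons_val_zero, Matrix.cons_val_one]
    rw [← key]
    have : ∀ᵐ x : ℝ ∂μ, (-X + -Y * (x : ℂ)) / (-X + -Y * (x : ℂ)) = 1 := by
      filter_upwards [ae_nn hμ] with x hx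
      apply div_self
      have h := ne_of_im (d_pos hX hY hx)
      intro h'
      apply h
      linear_combination -h'
    rw [integral_congr_ae this]
    simp
  · intro w
    rw [Fin.sum_univ_two]
    simp only [Matrix.cons_val_zero, Matrix.cons_val_one]
    rw [← key, tt]
    beta_reduce
    rw [hz0, hz1]

lemma rep_main {b : ℝ} (hb : b ≠ 0) (hb1 : 0 ≤ 1 - b ^ 2) {γ : ℕ → ℝ} (hγ : ∀ ℓ, 1 ≤ ℓ → 0 < γ ℓ)
    {μ : Measure ℝ} [IsProbabilityMeasure μ]
    (hμ : μ (Set.Iio 0) = 0) (hp : μ (Set.Ioi 0) ≠ 0) :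
    ∀ (n : ℕ) (zv : Fin (n + 2) → ℂ), (∀ i, i ≠ 0 → i ≠ Fin.last (n + 1) → (zv i).im = 0) →
      ∃ A B, Good A B ∧ Repr3 (tt b γ μ n) zv A B := by
  intro n
  induction n with
  | zero => exact fun zv _ => ⟨_, _, base_good hμ hp, rep_base hμ zv⟩
  | succ n ih =>
    intro zv hzv
    have hβ : 0 < b ^ 2 := by positivity
    have hγ' := hγ (n + 1) (by omega)
    obtain ⟨A, B, G, hR⟩ := ih (fun i => zv i.castSucc) (by
      intro i h1 h2
      exact hzv _ (by simpa using h1) (Fin.castSucc_ne_last i))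
    set c : ℝ := -(zv (Fin.last (n + 1)).castSucc).re with hc
    have hzc : zv (Fin.last (n + 1)).castSucc = -(c : ℂ) := by
      have := hzv (Fin.last (n + 1)).castSucc (by simpa using last_ne.symm) (Fin.castSucc_ne_last _)
      apply Complex.ext <;> simp [hc, this]
    let S : ℂ → ℂ → ℂ := fun X Y => solv fun s => JJ Y +
      (γ (n + 1) : ℂ) * tt b γ μ n (zprevVec b s (zmk zv X Y)) (eVec b n)
    have q0 : ∀ X Y, zmk zv X Y 0 = -X := fun X Y => by simp [zmk]
    have ql : ∀ X Y, zmk zv X Y (Fin.last (n + 1)).castSucc = -(c : ℂ) := fun X Y => by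
      rw [← hzc, zmk, if_neg (by simpa using last_ne.symm), if_neg (Fin.castSucc_ne_last _)]
    have qm : ∀ X Y, ∀ i : Fin (n + 2), i ≠ 0 → i ≠ Fin.last (n + 1) →
        zmk zv X Y i.castSucc = zv i.castSucc := fun X Y i h1 _ => by
      rw [zmk, if_neg (by simpa using h1), if_neg (Fin.castSucc_ne_last _)]
    have qY : ∀ X Y, zmk zv X Y (Fin.last (n + 2)) = -Y := fun X Y => by
      rw [zmk, if_neg last_ne.symm, if_pos rfl]
    have hT : ∀ X Y s : ℂ, 0 < X.im → 0 < s.im →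
        tt b γ μ n (zprevVec b s (zmk zv X Y)) (eVec b n) =
          FF (1 - b ^ 2) (b ^ 2) c A B X (JJ s) := fun X Y s hX hs =>
      T_eq hb hb1 hR (q0 X Y) (ql X Y) (qm X Y) hX hs
    have hS : ∀ X Y : ℂ, 0 < X.im → 0 < Y.im → 0 < (S X Y).im ∧
        S X Y = JJ Y + (γ (n + 1) : ℂ) *
          tt b γ μ n (zprevVec b (S X Y) (zmk zv X Y)) (eVec b n) := by
      intro X Y hX hY
      apply solv_spec
      obtain ⟨s, hs, h⟩ := exists_sol (c := c) G hb1 hβ hγ' hX (JJ_pos hY).le (ne_of_im (JJ_pos hY))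
      refine ⟨s, hs, ?_⟩
      rw [hT X Y s hX hs]
      exact h
    have hS1 := fun X Y hX hY => (hS X Y hX hY).1
    have hS2 : ∀ X Y : ℂ, 0 < X.im → 0 < Y.im → S X Y = JJ Y + (γ (n + 1) : ℂ) *
        FF (1 - b ^ 2) (b ^ 2) c A B X (JJ (S X Y)) := by
      intro X Y hX hY
      have h := (hS X Y hX hY).2
      rw [hT X Y _ hX (hS1 X Y hX hY)] at h
      exact h
    refine ⟨_, _, step_good G hb1 hβ hγ' hS1 hS2, ?_⟩
    intro X Y hX hY
    beta_reduce
    have hs := hS1 X Y hX hY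
    have hsol : (solv fun s => (zmk zv X Y (Fin.last (n + 2)))⁻¹ +
            (γ (n + 1) : ℂ) * tt b γ μ n (zprevVec b s (zmk zv X Y)) (eVec b n)) = S X Y := by
      simp only [S, qY]
      simp only [JJ, inv_neg]
    have hE := hS2 X Y hX hY
    have hTe := hT X Y (S X Y) hX hs
    obtain ⟨m, m0, ml, m1, mw⟩ := hR _ _ (arg1_im hb1 hX (JJ_pos hs).le)
      (arg2_im (c := c) hβ (JJ_pos hs))
    rw [← zprev_eq (q0 X Y) (ql X Y) (qm X Y)] at m1 mw
    rw [mw] at hTe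
    have hTp := FF_im (c := c) G hb1 hβ hX (JJ_pos hs)
    generalize S X Y = s at hs hE hTe m0 ml m1 mw hTp hsol ⊢
    set T := FF (1 - b ^ 2) (b ^ 2) c A B X (JJ s) with hTdef
    have hsum : ∑ i, m i * zmk zv X Y i.castSucc + T / s = 1 := by
      rw [← m1, ← hTe, Finset.sum_div, ← Finset.sum_add_distrib]
      refine Finset.sum_congr rfl fun i _ => ?_
      rw [zprev_add]; ring
    have hs0 := ne_of_im hs
    have hY0 := ne_of_im hY
    have hT0 := ne_of_im hTp
    have hq : JJ (γ (n + 1) * Y + JJ T) = -(T / (s * Y)) := by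
      rw [B_form hY0 hT0 hE, JJ]
      field_simp
    refine ⟨Fin.snoc m (-(T / (s * Y))), ?_, ?_, ?_, ?_⟩
    · have : (0 : Fin (n + 1 + 2)) = (0 : Fin (n + 2)).castSucc := rfl
      rw [this, Fin.snoc_castSucc, m0]
    · rw [Fin.snoc_last, hq]
    · rw [Fin.sum_univ_castSucc]
      simp only [Fin.snoc_castSucc, Fin.snoc_last]
      rw [qY, ← hsum]
      congr 1
      field_simp
    · intro w
      rw [Fin.sum_univ_castSucc]
      simp only [Fin.snoc_castSucc, Fin.snoc_last]
      rw [tt]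
      beta_reduce
      rw [hsol, mw, qY]
      have e : ∑ i, m i * wprevVec (zmk zv X Y) w i = ∑ i, m i * w i.castSucc +
          (w (Fin.last (n + 2)) / Y) * ∑ i, m i * zmk zv X Y i.castSucc := by
        rw [Finset.mul_sum, ← Finset.sum_add_distrib]
        refine Finset.sum_congr rfl fun i _ => ?_
        rw [wprevVec, qY]
        ring
      have e2 : ∑ i, m i * zmk zv X Y i.castSucc = 1 - T / s := by
        rw [← hsum]; ring
      rw [e, e2]
      field_simp
      ring

lemma final_aux {b : ℝ} (hb : b ≠ 0) (hb1 : 0 ≤ 1 - b ^ 2) {γ : ℕ → ℝ} (hγ : ∀ ℓ, 1 ≤ ℓ → 0 < γ ℓ)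
    {μ : Measure ℝ} [IsProbabilityMeasure μ]
    (hμ : μ (Set.Iio 0) = 0) (hp : μ (Set.Ioi 0) ≠ 0) (n : ℕ) (zv : Fin (n + 3) → ℂ)
    (hz : InDomZ zv) :
    (0 < (ss b γ μ (n + 1) zv).im ∧
          ss b γ μ (n + 1) zv = (zv (Fin.last (n + 2)))⁻¹ +
            (γ (n + 1) : ℂ) * tt b γ μ n (zprevVec b (ss b γ μ (n + 1) zv) zv) (eVec b n)) ∧
        (∀ s' : ℂ, 0 < s'.im →
          s' = (zv (Fin.last (n + 2)))⁻¹ +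
            (γ (n + 1) : ℂ) * tt b γ μ n (zprevVec b s' zv) (eVec b n) →
          s' = ss b γ μ (n + 1) zv) := by
  obtain ⟨z0, zm, zl, zn⟩ := hz
  have hβ : 0 < b ^ 2 := by positivity
  have hγ' := hγ (n + 1) (by omega)
  obtain ⟨A, B, G, hR⟩ := rep_main hb hb1 hγ hμ hp n (fun i => zv i.castSucc) (by
    intro i h1 h2
    exact zm _ (by simpa using h1) (Fin.castSucc_ne_last i))
  set c : ℝ := -(zv (Fin.last (n + 1)).castSucc).re with hc
  have hzc : zv (Fin.last (n + 1)).castSucc = -(c : ℂ) := by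
    have := zm (Fin.last (n + 1)).castSucc (by simpa using last_ne.symm) (Fin.castSucc_ne_last _)
    apply Complex.ext <;> simp [hc, this]
  have hX : 0 < (-zv 0).im := by simpa using z0
  have hT : ∀ s : ℂ, 0 < s.im → tt b γ μ n (zprevVec b s zv) (eVec b n) =
      FF (1 - b ^ 2) (b ^ 2) c A B (-zv 0) (JJ s) := fun s hs =>
    T_eq hb hb1 hR (by simp) hzc (fun _ _ _ => rfl) hX hs
  have hw : 0 ≤ ((zv (Fin.last (n + 2)))⁻¹).im := by
    rw [Complex.inv_im]
    exact div_nonneg (by simpa using zl) (Complex.normSq_nonneg _)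
  have hw0 : (zv (Fin.last (n + 2)))⁻¹ ≠ 0 := inv_ne_zero zn
  have h1 : 0 < (ss b γ μ (n + 1) zv).im ∧
          ss b γ μ (n + 1) zv = (zv (Fin.last (n + 2)))⁻¹ +
            (γ (n + 1) : ℂ) * tt b γ μ n (zprevVec b (ss b γ μ (n + 1) zv) zv) (eVec b n) := by
    rw [ss]
    apply solv_spec
    obtain ⟨s, hs, h⟩ := exists_sol (c := c) G hb1 hβ hγ' hX hw hw0
    refine ⟨s, hs, ?_⟩
    rw [hT s hs]
    exact h
  refine ⟨h1, fun s' hs' h' => ?_⟩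
  obtain ⟨h2, h3⟩ := h1
  rw [hT _ h2] at h3
  rw [hT _ hs'] at h'
  exact unique_sol G hb1 hβ hγ' hX hw hs' h2 h' h3

end assembly

theorem fixed_point_exists_unique
    (bσ : ℝ) (hbσ : bσ ≠ 0) (hbσ1 : |bσ| ≤ 1)
    (γ : ℕ → ℝ) (hγ : ∀ ℓ, 1 ≤ ℓ → 0 < γ ℓ)
    (μ0 : Measure ℝ) (hμ0prob : IsProbabilityMeasure μ0)
    (hμ0supp : μ0 (Set.Iio 0) = 0)
    (hμ0ne : μ0 ≠ Measure.dirac 0) :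
    ∃ (t : (ℓ : ℕ) → (Fin (ℓ + 2) → ℂ) → (Fin (ℓ + 2) → ℂ) → ℂ)
      (s : (ℓ : ℕ) → (Fin (ℓ + 2) → ℂ) → ℂ),
      -- `t₀((z₋₁,z₀),(w₋₁,w₀)) = ∫ (w₋₁ + w₀ x)/(z₋₁ + z₀ x) dμ₀(x)`
      (∀ zv : Fin 2 → ℂ, InDomZ zv → ∀ wv : Fin 2 → ℂ,
        t 0 zv wv = ∫ x, (wv 0 + wv 1 * x) / (zv 0 + zv 1 * x) ∂μ0) ∧
      -- the recursion, existence, and uniqueness at each level `ℓ + 1 ≥ 1`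
      (∀ ℓ : ℕ, ∀ zv : Fin (ℓ + 3) → ℂ, InDomZ zv →
        -- `s_{ℓ+1}(z) ∈ ℂ⁺` solves the fixed-point equation
        (0 < (s (ℓ + 1) zv).im ∧
          s (ℓ + 1) zv = (zv (Fin.last (ℓ + 2)))⁻¹ +
            (γ (ℓ + 1) : ℂ) * t ℓ (zprevVec bσ (s (ℓ + 1) zv) zv) (eVec bσ ℓ)) ∧
        -- and it is the unique solution in `ℂ⁺`
        (∀ s' : ℂ, 0 < s'.im →
          s' = (zv (Fin.last (ℓ + 2)))⁻¹ +
            (γ (ℓ + 1) : ℂ) * t ℓ (zprevVec bσ s' zv) (eVec bσ ℓ) →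
          s' = s (ℓ + 1) zv) ∧
        -- `t_{ℓ+1}` is given by the recursion
        (∀ wv : Fin (ℓ + 3) → ℂ,
          t (ℓ + 1) zv wv = wv (Fin.last (ℓ + 2)) / zv (Fin.last (ℓ + 2)) +
            t ℓ (zprevVec bσ (s (ℓ + 1) zv) zv) (wprevVec zv wv))) := by
  have hb1 : 0 ≤ 1 - bσ ^ 2 := by
    have := (sq_le_one_iff_abs_le_one bσ).mpr hbσ1
    linarith
  have hp := pos_meas hμ0supp hμ0ne
  refine ⟨tt bσ γ μ0, ss bσ γ μ0, fun zv _ wv => rfl, fun ℓ zv hz => ?_⟩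
  obtain ⟨h1, h2⟩ := final_aux hbσ hb1 hγ hμ0supp hp ℓ zv hz
  exact ⟨h1, h2, fun wv => rfl⟩
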